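/- arXiv:0907.5230 — 4 statements merged into one kernel-verified Lean document; each statement's English description precedes it below -/
import Mathlib

section
/- Suppose there exist μ > 0 and a function η that is C² in Ω, continuous on the closure of Ω, positive in Ω, vanishes on ∂Ω, and satisfies the adjoint eigenvalue equation −Δη(x) − div(u(x) η(x)) = μ η(x) for all x ∈ Ω. Then for every λ > μ / g'(0) the explosion problem at parameter λ admits no nonnegative classical solution. -/
open Set MeasureTheory
open scoped RealInnerProductSpace

noncomputable section

/-- The Laplacian of a real-valued function on Euclidean space, computed as the sum of
the second partial derivatives in the coordinate directions. -/
def lapl {n : ℕ} (φ : EuclideanSpace ℝ (Fin n) → ℝ) (x : EuclideanSpace ℝ (Fin n)) : ℝ :=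
  ∑ i : Fin n, fderiv ℝ (fun y => fderiv ℝ φ y (EuclideanSpace.single i 1)) x
    (EuclideanSpace.single i 1)

/-- The divergence of a vector field on Euclidean space. -/
def dvg {n : ℕ} (u : EuclideanSpace ℝ (Fin n) → EuclideanSpace ℝ (Fin n))
    (x : EuclideanSpace ℝ (Fin n)) : ℝ :=
  ∑ i : Fin n, fderiv ℝ (fun y => u y i) x (EuclideanSpace.single i 1)

/-- A classical solution of the explosion problem `-Δφ + ⟨u, ∇φ⟩ = λ g(φ)` in `Ω`,
vanishing on `∂Ω`: `C²` in `Ω`, continuous on the closure of `Ω`. -/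
def IsClassicalSol {n : ℕ} (Ω : Set (EuclideanSpace ℝ (Fin n)))
    (u : EuclideanSpace ℝ (Fin n) → EuclideanSpace ℝ (Fin n)) (g : ℝ → ℝ) (lam : ℝ)
    (φ : EuclideanSpace ℝ (Fin n) → ℝ) : Prop :=
  (∀ x ∈ Ω, ContDiffAt ℝ 2 φ x) ∧ ContinuousOn φ (closure Ω) ∧
  (∀ x ∈ Ω, -lapl φ x + ⟪u x, gradient φ x⟫ = lam * g (φ x)) ∧
  (∀ x ∈ frontier Ω, φ x = 0)

/-- A nonnegative classical solution. -/
def IsNonnegSol {n : ℕ} (Ω : Set (EuclideanSpace ℝ (Fin n)))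
    (u : EuclideanSpace ℝ (Fin n) → EuclideanSpace ℝ (Fin n)) (g : ℝ → ℝ) (lam : ℝ)
    (φ : EuclideanSpace ℝ (Fin n) → ℝ) : Prop :=
  IsClassicalSol Ω u g lam φ ∧ ∀ x ∈ Ω, 0 ≤ φ x

/-- A minimal nonnegative classical solution: one that lies below every nonnegative
classical solution at the same parameter. -/
def IsMinimalSol {n : ℕ} (Ω : Set (EuclideanSpace ℝ (Fin n)))
    (u : EuclideanSpace ℝ (Fin n) → EuclideanSpace ℝ (Fin n)) (g : ℝ → ℝ) (lam : ℝ)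
    (φ : EuclideanSpace ℝ (Fin n) → ℝ) : Prop :=
  IsNonnegSol Ω u g lam φ ∧ ∀ v, IsNonnegSol Ω u g lam v → ∀ x ∈ Ω, φ x ≤ v x

/-!
Pairing `L φ = λ g(φ)` with `η` and the adjoint equation with `φ` would give
`∫ η (λ g(φ) - μ φ) = 0`, whereas the tangent to `g` at `0` gives `λ g(φ) - μ φ ≥ λ g(0) > 0`.
The integration by parts is not available for `η` itself, since no regularity of the gradients
up to the boundary is known. Instead `η` is replaced by `K ∘ η` with `K` a smooth convex
truncation vanishing on `(-∞, ε]`. Then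
`L* (K ∘ η) = K'(η) L* η - K''(η) ‖∇η‖² + (η K'(η) - K(η)) div u`.
The gradient term has the favourable sign because `K` is convex, and `0 ≤ s K'(s) - K(s) ≤ 2 ε`,
so truncation costs only `O(ε)` and no estimate on `∇η` or `∇φ` is needed.
-/

open Filter Topology
open Function (support)
open scoped Gradient ContDiff

local notation "𝔼" d:max => EuclideanSpace ℝ (Fin d)

section FDeriv

variable {E F : Type*} [NormedAddCommGroup E] [NormedSpace ℝ E] [NormedAddCommGroup F]
  [NormedSpace ℝ F]

theorem exists_norm_fderiv_le_on_interior {f : E → F} {s : Set E} (hs : IsCompact s)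
    (hf : ContDiffOn ℝ 1 f s) : ∃ C, ∀ x ∈ interior s, ‖fderiv ℝ f x‖ ≤ C := by
  suffices ∃ C, ∀ x ∈ s ∩ interior s, ‖fderiv ℝ f x‖ ≤ C by
    simpa only [inter_eq_right.2 interior_subset] using this
  refine hs.induction_on (p := fun t => ∃ C, ∀ x ∈ t ∩ interior s, ‖fderiv ℝ f x‖ ≤ C)
    ⟨0, by simp⟩ (fun t t' htt' ⟨C, hC⟩ => ⟨C, fun x hx => hC x ⟨htt' hx.1, hx.2⟩⟩) ?_ ?_
  · rintro t t' ⟨C, hC⟩ ⟨C', hC'⟩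
    refine ⟨max C C', ?_⟩
    rintro x ⟨hx | hx, hxs⟩
    exacts [le_max_of_le_left (hC x ⟨hx, hxs⟩), le_max_of_le_right (hC' x ⟨hx, hxs⟩)]
  · intro x hx
    obtain ⟨t, ht, -, -, f', hf', hf'cont⟩ :=
      (contDiffWithinAt_succ_iff_hasFDerivWithinAt' (n := 0) (by simp)).1 (hf x hx)
    rw [insert_eq_of_mem hx] at ht
    have hbound : ∀ᶠ y in 𝓝[s] x, ‖f' y‖ ≤ ‖f' x‖ + 1 :=
      (hf'cont.continuousWithinAt.norm.eventually_lt_const (lt_add_one _)).mono fun _ => le_of_lt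
    refine ⟨t ∩ {y | ‖f' y‖ ≤ ‖f' x‖ + 1}, inter_mem ht hbound, ‖f' x‖ + 1, ?_⟩
    rintro y ⟨⟨hyt, hyb⟩, hys⟩
    rwa [((hf' y hyt).hasFDerivAt (mem_interior_iff_mem_nhds.1 hys)).fderiv]

variable [MeasurableSpace E] [BorelSpace E] (ν : Measure E)

theorem integrable_fderiv_apply_of_hasCompactSupport [IsFiniteMeasureOnCompacts ν] {f : E → F}
    (hf : ContDiff ℝ 1 f) (hsupp : HasCompactSupport f) (v : E) :
    Integrable (fun x => fderiv ℝ f x v) ν :=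
  ((hf.continuous_fderiv one_ne_zero).clm_apply continuous_const).integrable_of_hasCompactSupport
    (hsupp.fderiv_apply ℝ v)

theorem integral_fderiv_apply_eq_zero [FiniteDimensional ℝ E] [ν.IsAddHaarMeasure] {f : E → ℝ}
    (hf : ContDiff ℝ 1 f) (hsupp : HasCompactSupport f) (v : E) : ∫ x, fderiv ℝ f x v ∂ν = 0 := by
  have h := integral_mul_fderiv_eq_neg_fderiv_mul_of_integrable (μ := ν)
    (f := fun _ : E => (1 : ℝ)) (g := f) (v := v) (by simp)
    (by simpa using integrable_fderiv_apply_of_hasCompactSupport ν hf hsupp v)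
    (by simpa using hf.continuous.integrable_of_hasCompactSupport hsupp)
    (fun x _ => by fun_prop) (fun x _ => hf.differentiable one_ne_zero x)
  simpa using h

end FDeriv

theorem contDiff_of_contDiffAt_tsupport {𝕜 E F : Type*} [NontriviallyNormedField 𝕜]
    [NormedAddCommGroup E] [NormedSpace 𝕜 E] [NormedAddCommGroup F] [NormedSpace 𝕜 F]
    {m : WithTop ℕ∞} {f : E → F} (hf : ∀ x ∈ tsupport f, ContDiffAt 𝕜 m f x) :
    ContDiff 𝕜 m f :=
  contDiff_iff_contDiffAt.2 fun x => (em _).elim (hf x) fun hx =>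
    contDiffAt_const.congr_of_eventuallyEq (notMem_tsupport_iff_eventuallyEq.1 hx)

section Gradient

variable {H : Type*} [NormedAddCommGroup H] [InnerProductSpace ℝ H] [CompleteSpace H]
  {f : H → ℝ} {x : H}

theorem contDiffAt_gradient {m k : WithTop ℕ∞} (hf : ContDiffAt ℝ k f x) (hmk : m + 1 ≤ k) :
    ContDiffAt ℝ m (∇ f) x :=
  (InnerProductSpace.toDual ℝ H).symm.toContinuousLinearEquiv.contDiff.contDiffAt.comp x
    (hf.fderiv_right hmk)

theorem gradient_comp {k : ℝ → ℝ} (hk : DifferentiableAt ℝ k (f x))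
    (hf : DifferentiableAt ℝ f x) : ∇ (k ∘ f) x = deriv k (f x) • ∇ f x := by
  rw [gradient, (hk.hasDerivAt.comp_hasFDerivAt x hf.hasFDerivAt).fderiv, map_smul, gradient]

end Gradient

section Divergence

variable {n : ℕ} {F G : 𝔼 n → 𝔼 n} {f : 𝔼 n → ℝ} {x : 𝔼 n}

theorem fderiv_euclidean_apply (hF : DifferentiableAt ℝ F x) (v : 𝔼 n) (i : Fin n) :
    fderiv ℝ (fun y => F y i) x v = fderiv ℝ F x v i :=
  congrArg (· v) ((EuclideanSpace.proj i : 𝔼 n →L[ℝ] ℝ).hasFDerivAt.comp x hF.hasFDerivAt).fderiv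

theorem dvg_eq_sum_fderiv (hF : DifferentiableAt ℝ F x) :
    dvg F x = ∑ i, fderiv ℝ F x (EuclideanSpace.single i 1) i := by
  simp only [dvg, fderiv_euclidean_apply hF]

theorem dvg_le_of_norm_fderiv_le {C : ℝ} (hF : DifferentiableAt ℝ F x) (hC : ‖fderiv ℝ F x‖ ≤ C) :
    dvg F x ≤ n * C :=
  calc dvg F x = ∑ i, fderiv ℝ F x (EuclideanSpace.single i 1) i := dvg_eq_sum_fderiv hF
    _ ≤ ∑ _i : Fin n, C := Finset.sum_le_sum fun i _ =>
      calc fderiv ℝ F x (EuclideanSpace.single i 1) i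
          ≤ ‖fderiv ℝ F x (EuclideanSpace.single i 1)‖ :=
            (Real.le_norm_self _).trans (PiLp.norm_apply_le _ i)
        _ ≤ ‖fderiv ℝ F x‖ := (fderiv ℝ F x).unit_le_opNorm _ (by simp)
        _ ≤ C := hC
    _ = n * C := by simp

theorem bddAbove_dvg_image {Ω : Set (𝔼 n)} (hΩo : IsOpen Ω) (hΩb : Bornology.IsBounded Ω)
    (hF : ContDiffOn ℝ 1 F (closure Ω)) : BddAbove (dvg F '' Ω) := by
  obtain ⟨C, hC⟩ := exists_norm_fderiv_le_on_interior hΩb.isCompact_closure hF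
  have hint : Ω ⊆ interior (closure Ω) := hΩo.subset_interior_closure
  refine ⟨n * C, forall_mem_image.2 fun x hx => ?_⟩
  have hFx : ContDiffAt ℝ 1 F x := hF.contDiffAt (mem_interior_iff_mem_nhds.1 (hint hx))
  exact dvg_le_of_norm_fderiv_le (hFx.differentiableAt one_ne_zero) (hC x (hint hx))

theorem dvg_congr (h : F =ᶠ[𝓝 x] G) : dvg F x = dvg G x :=
  Finset.sum_congr rfl fun i _ => by
    have hi : (fun y => F y i) =ᶠ[𝓝 x] fun y => G y i := h.fun_comp fun v : 𝔼 n => v i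
    rw [hi.fderiv_eq]

theorem dvg_add (hF : DifferentiableAt ℝ F x) (hG : DifferentiableAt ℝ G x) :
    dvg (fun y => F y + G y) x = dvg F x + dvg G x := by
  simp [dvg_eq_sum_fderiv, hF, hG, fderiv_fun_add, Finset.sum_add_distrib]

theorem dvg_sub (hF : DifferentiableAt ℝ F x) (hG : DifferentiableAt ℝ G x) :
    dvg (fun y => F y - G y) x = dvg F x - dvg G x := by
  simp [dvg_eq_sum_fderiv, hF, hG, fderiv_fun_sub, Finset.sum_sub_distrib]

theorem gradient_euclidean_apply (f : 𝔼 n → ℝ) (x : 𝔼 n) (i : Fin n) :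
    ∇ f x i = fderiv ℝ f x (EuclideanSpace.single i 1) := by
  rw [← inner_gradient_left, EuclideanSpace.inner_single_right, one_mul, conj_trivial]

theorem dvg_smul (hf : DifferentiableAt ℝ f x) (hF : DifferentiableAt ℝ F x) :
    dvg (fun y => f y • F y) x = f x * dvg F x + ⟪F x, ∇ f x⟫ := by
  have hcoord : ⟪F x, ∇ f x⟫ = ∑ i, F x i * fderiv ℝ f x (EuclideanSpace.single i 1) := by
    simp only [PiLp.inner_apply, gradient_euclidean_apply, Real.inner_apply]
  rw [hcoord, dvg_eq_sum_fderiv (hf.fun_smul hF), dvg_eq_sum_fderiv hF, Finset.mul_sum,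
    ← Finset.sum_add_distrib]
  simp [fderiv_fun_smul hf hF, mul_comm]

theorem integrable_dvg (hF : ContDiff ℝ 1 F) (hsupp : HasCompactSupport F) :
    Integrable (dvg F) :=
  integrable_finsetSum _ fun i _ =>
    integrable_fderiv_apply_of_hasCompactSupport volume ((contDiff_piLp 2).1 hF i)
      (hsupp.comp_left (g := fun v : 𝔼 n => v i) rfl) _

theorem integral_dvg_eq_zero (hF : ContDiff ℝ 1 F) (hsupp : HasCompactSupport F) :
    ∫ x, dvg F x = 0 := by
  have hcoord (i : Fin n) : ContDiff ℝ 1 fun y => F y i := (contDiff_piLp 2).1 hF i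
  have hcoord_supp (i : Fin n) : HasCompactSupport fun y => F y i :=
    hsupp.comp_left (g := fun v : 𝔼 n => v i) rfl
  simp only [dvg]
  rw [integral_finsetSum _ fun i _ =>
    integrable_fderiv_apply_of_hasCompactSupport volume (hcoord i) (hcoord_supp i) _]
  exact Finset.sum_eq_zero fun i _ =>
    integral_fderiv_apply_eq_zero volume (hcoord i) (hcoord_supp i) _

theorem lapl_eq_dvg_gradient (f : 𝔼 n → ℝ) (x : 𝔼 n) : lapl f x = dvg (∇ f) x := by
  simp only [lapl, dvg, gradient_euclidean_apply]

theorem lapl_comp {k : ℝ → ℝ} (hk : ContDiffAt ℝ 2 k (f x)) (hf : ContDiffAt ℝ 2 f x) :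
    lapl (k ∘ f) x = deriv k (f x) * lapl f x + deriv (deriv k) (f x) * ‖∇ f x‖ ^ 2 := by
  have hk' : DifferentiableAt ℝ (deriv k) (f x) :=
    ((hk.fderiv_right one_add_one_eq_two.le).clm_apply contDiffAt_const).differentiableAt
      one_ne_zero
  have hgrad : ∇ (k ∘ f) =ᶠ[𝓝 x] fun y => (deriv k ∘ f) y • ∇ f y := by
    filter_upwards [hf.eventually (by simp), hf.continuousAt.eventually (hk.eventually (by simp))]
      with y hfy hky
    exact gradient_comp (hky.differentiableAt two_ne_zero) (hfy.differentiableAt two_ne_zero)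
  have hfx : DifferentiableAt ℝ f x := hf.differentiableAt two_ne_zero
  have hfx' : DifferentiableAt ℝ (∇ f) x :=
    (contDiffAt_gradient hf one_add_one_eq_two.le).differentiableAt one_ne_zero
  rw [lapl_eq_dvg_gradient, lapl_eq_dvg_gradient, dvg_congr hgrad,
    dvg_smul (hk'.comp x hfx) hfx', gradient_comp hk' hfx, real_inner_smul_right,
    real_inner_self_eq_norm_sq, Function.comp_apply]

end Divergence

section ConvexTruncation

/-- A smooth convex truncation at scale `ε > 0`, vanishing for `s ≤ ε` and at least `s - 2 * ε`:
with `t = s / ε - 1` it is `ε * t * exp (-1 / t)` for `t > 0` and `0` for `t ≤ 0`. Composing with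
it cuts a function off to a compactly supported one while keeping subsolutions almost intact. -/
def convexTruncation (ε s : ℝ) : ℝ :=
  ε * ((s / ε - 1) * expNegInvGlue (s / ε - 1))

theorem hasDerivAt_mul_expNegInvGlue (t : ℝ) :
    HasDerivAt (fun t => t * expNegInvGlue t) ((1 + t⁻¹) * expNegInvGlue t) t := by
  have h : HasDerivAt expNegInvGlue ((t⁻¹) ^ 2 * expNegInvGlue t) t := by
    simpa using expNegInvGlue.hasDerivAt_polynomial_eval_inv_mul 1 t
  refine ((hasDerivAt_id' t).mul h).congr_deriv ?_
  rcases eq_or_ne t 0 with rfl | ht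
  · simp
  · field_simp

theorem hasDerivAt_one_add_inv_mul_expNegInvGlue (t : ℝ) :
    HasDerivAt (fun t => (1 + t⁻¹) * expNegInvGlue t) (t⁻¹ ^ 3 * expNegInvGlue t) t := by
  have h := expNegInvGlue.hasDerivAt_polynomial_eval_inv_mul (1 + Polynomial.X) t
  simp only [Polynomial.eval_add, Polynomial.eval_one, Polynomial.eval_X] at h
  refine h.congr_deriv (congrArg (· * _) ?_)
  simp only [Polynomial.derivative_add, Polynomial.derivative_one, Polynomial.derivative_X,
    zero_add, add_sub_cancel_left, Polynomial.eval_mul, Polynomial.eval_pow, Polynomial.eval_X]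
  ring

theorem expNegInvGlue_of_pos {t : ℝ} (ht : 0 < t) : expNegInvGlue t = Real.exp (-t⁻¹) :=
  if_neg ht.not_ge

theorem expNegInvGlue_le_one (t : ℝ) : expNegInvGlue t ≤ 1 := by
  rcases le_or_gt t 0 with ht | ht
  · simp [expNegInvGlue.zero_of_nonpos ht]
  · simpa [expNegInvGlue_of_pos ht] using ht.le

theorem one_add_inv_mul_expNegInvGlue_nonneg (t : ℝ) : 0 ≤ (1 + t⁻¹) * expNegInvGlue t := by
  rcases le_or_gt t 0 with ht | ht
  · simp [expNegInvGlue.zero_of_nonpos ht]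
  · have := expNegInvGlue.nonneg t
    positivity

theorem one_add_inv_mul_expNegInvGlue_le_one (t : ℝ) : (1 + t⁻¹) * expNegInvGlue t ≤ 1 := by
  rcases le_or_gt t 0 with ht | ht
  · simp [expNegInvGlue.zero_of_nonpos ht]
  · rw [expNegInvGlue_of_pos ht, Real.exp_neg, ← div_eq_mul_inv, div_le_one (Real.exp_pos _),
      add_comm]
    exact Real.add_one_le_exp _

theorem mul_expNegInvGlue_nonneg (t : ℝ) : 0 ≤ t * expNegInvGlue t := by
  rcases le_or_gt t 0 with ht | ht
  · simp [expNegInvGlue.zero_of_nonpos ht]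
  · exact mul_nonneg ht.le (expNegInvGlue.nonneg t)

theorem sub_one_le_mul_expNegInvGlue (t : ℝ) : t - 1 ≤ t * expNegInvGlue t := by
  rcases le_or_gt t 0 with ht | ht
  · simpa [expNegInvGlue.zero_of_nonpos ht] using ht.trans zero_le_one
  · calc t - 1 = t * (-t⁻¹ + 1) := by field_simp; ring
      _ ≤ t * expNegInvGlue t := by
        rw [expNegInvGlue_of_pos ht]
        exact mul_le_mul_of_nonneg_left (Real.add_one_le_exp _) ht.le

variable {ε : ℝ}

theorem contDiff_convexTruncation (ε : ℝ) {m : ℕ∞} : ContDiff ℝ m (convexTruncation ε) := by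
  unfold convexTruncation
  fun_prop

theorem convexTruncation_eq_zero (hε : 0 < ε) {s : ℝ} (hs : s ≤ ε) : convexTruncation ε s = 0 := by
  have ht : s / ε - 1 ≤ 0 := sub_nonpos.2 ((div_le_one hε).2 hs)
  simp [convexTruncation, expNegInvGlue.zero_of_nonpos ht]

theorem convexTruncation_nonneg (hε : 0 ≤ ε) (s : ℝ) : 0 ≤ convexTruncation ε s :=
  mul_nonneg hε (mul_expNegInvGlue_nonneg _)

theorem sub_two_mul_le_convexTruncation (hε : 0 < ε) (s : ℝ) :
    s - 2 * ε ≤ convexTruncation ε s :=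
  calc s - 2 * ε = ε * (s / ε - 1 - 1) := by field_simp; ring
    _ ≤ convexTruncation ε s :=
      mul_le_mul_of_nonneg_left (sub_one_le_mul_expNegInvGlue _) hε.le

theorem deriv_convexTruncation (hε : ε ≠ 0) :
    deriv (convexTruncation ε) =
      fun s => (1 + (s / ε - 1)⁻¹) * expNegInvGlue (s / ε - 1) := by
  funext s
  have ht : HasDerivAt (fun s => s / ε - 1) (1 / ε) s :=
    ((hasDerivAt_id' s).div_const ε).sub_const 1
  refine (((hasDerivAt_mul_expNegInvGlue _).comp s ht).const_mul ε).deriv.trans ?_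
  field_simp

theorem deriv_convexTruncation_nonneg (hε : ε ≠ 0) (s : ℝ) : 0 ≤ deriv (convexTruncation ε) s := by
  rw [deriv_convexTruncation hε]
  exact one_add_inv_mul_expNegInvGlue_nonneg _

theorem deriv_deriv_convexTruncation_nonneg (hε : 0 < ε) (s : ℝ) :
    0 ≤ deriv (deriv (convexTruncation ε)) s := by
  have ht : HasDerivAt (fun s => s / ε - 1) (1 / ε) s :=
    ((hasDerivAt_id' s).div_const ε).sub_const 1
  have hderiv := ((hasDerivAt_one_add_inv_mul_expNegInvGlue _).comp s ht).deriv
  rw [deriv_convexTruncation hε.ne']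
  refine le_of_le_of_eq ?_ hderiv.symm
  rcases le_or_gt (s / ε - 1) 0 with h | h
  · simp [expNegInvGlue.zero_of_nonpos h]
  · have := expNegInvGlue.nonneg (s / ε - 1)
    positivity

theorem mul_deriv_convexTruncation_sub_mem_Icc (hε : 0 < ε) (s : ℝ) :
    s * deriv (convexTruncation ε) s - convexTruncation ε s ∈ Icc 0 (2 * ε) := by
  set t := s / ε - 1 with ht
  have hs : s = ε * (t + 1) := by rw [ht]; field_simp; ring
  have heq : s * deriv (convexTruncation ε) s - convexTruncation ε s =
      ε * (expNegInvGlue t + (1 + t⁻¹) * expNegInvGlue t) := by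
    simp only [deriv_convexTruncation hε.ne', convexTruncation, ← ht]
    rw [hs]
    rcases eq_or_ne t 0 with h0 | h0
    · simp [h0]
    · field_simp
      ring
  rw [heq, mem_Icc, mul_comm 2]
  refine ⟨mul_nonneg hε.le (add_nonneg (expNegInvGlue.nonneg t)
    (one_add_inv_mul_expNegInvGlue_nonneg t)), mul_le_mul_of_nonneg_left ?_ hε.le⟩
  linarith [expNegInvGlue_le_one t, one_add_inv_mul_expNegInvGlue_le_one t]

end ConvexTruncation

section AdvectionDiffusion

variable {n : ℕ} {u : 𝔼 n → 𝔼 n} {φ ψ h : 𝔼 n → ℝ} {x : 𝔼 n}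

/-- The advection-diffusion operator `L φ = -Δφ + ⟨u, ∇φ⟩` with drift `u`. -/
def advectionDiffusion (u : 𝔼 n → 𝔼 n) (φ : 𝔼 n → ℝ) (x : 𝔼 n) : ℝ :=
  -lapl φ x + ⟪u x, ∇ φ x⟫

/-- The formal adjoint `L* ψ = -Δψ - div (ψ u)` of `advectionDiffusion u`. -/
def advectionDiffusionAdjoint (u : 𝔼 n → 𝔼 n) (ψ : 𝔼 n → ℝ) (x : 𝔼 n) : ℝ :=
  -lapl ψ x - dvg (fun y => ψ y • u y) x

theorem advectionDiffusionAdjoint_congr {η : 𝔼 n → ℝ} (hηψ : η =ᶠ[𝓝 x] ψ) :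
    advectionDiffusionAdjoint u η x = advectionDiffusionAdjoint u ψ x := by
  have hgrad : ∇ η =ᶠ[𝓝 x] ∇ ψ := by
    filter_upwards [hηψ.eventuallyEq_nhds] with y hy
    rw [gradient, hy.fderiv_eq, gradient]
  have hsmul : (fun y => η y • u y) =ᶠ[𝓝 x] fun y => ψ y • u y := by
    filter_upwards [hηψ] with y hy
    rw [hy]
  rw [advectionDiffusionAdjoint, advectionDiffusionAdjoint, lapl_eq_dvg_gradient,
    lapl_eq_dvg_gradient, dvg_congr hgrad, dvg_congr hsmul]

theorem advectionDiffusionAdjoint_comp {k : ℝ → ℝ} (hk : ContDiffAt ℝ 2 k (h x))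
    (hh : ContDiffAt ℝ 2 h x) (hu : DifferentiableAt ℝ u x) :
    advectionDiffusionAdjoint u (k ∘ h) x =
      deriv k (h x) * advectionDiffusionAdjoint u h x - deriv (deriv k) (h x) * ‖∇ h x‖ ^ 2
        + (h x * deriv k (h x) - k (h x)) * dvg u x := by
  have hhx : DifferentiableAt ℝ h x := hh.differentiableAt two_ne_zero
  have hkx : DifferentiableAt ℝ k (h x) := hk.differentiableAt two_ne_zero
  rw [advectionDiffusionAdjoint, advectionDiffusionAdjoint, lapl_comp hk hh,
    dvg_smul (hkx.comp x hhx) hu, dvg_smul hhx hu, gradient_comp hkx hhx, real_inner_smul_right,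
    Function.comp_apply]
  ring

/-- The flux in Green's second identity for `advectionDiffusion u`; its divergence is
`ψ * L φ - φ * L* ψ`. -/
def greenField (u : 𝔼 n → 𝔼 n) (ψ φ : 𝔼 n → ℝ) (x : 𝔼 n) : 𝔼 n :=
  φ x • ∇ ψ x - ψ x • ∇ φ x + φ x • ψ x • u x

theorem dvg_greenField (hψ : ContDiffAt ℝ 2 ψ x) (hφ : ContDiffAt ℝ 2 φ x)
    (hu : DifferentiableAt ℝ u x) :
    dvg (greenField u ψ φ) x =
      ψ x * advectionDiffusion u φ x - φ x * advectionDiffusionAdjoint u ψ x := by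
  have hψx : DifferentiableAt ℝ ψ x := hψ.differentiableAt two_ne_zero
  have hφx : DifferentiableAt ℝ φ x := hφ.differentiableAt two_ne_zero
  have hψx' : DifferentiableAt ℝ (∇ ψ) x :=
    (contDiffAt_gradient hψ one_add_one_eq_two.le).differentiableAt one_ne_zero
  have hφx' : DifferentiableAt ℝ (∇ φ) x :=
    (contDiffAt_gradient hφ one_add_one_eq_two.le).differentiableAt one_ne_zero
  unfold greenField
  rw [dvg_add ((hφx.fun_smul hψx').fun_sub (hψx.fun_smul hφx')) (hφx.fun_smul (hψx.fun_smul hu)),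
    dvg_sub (hφx.fun_smul hψx') (hψx.fun_smul hφx'), dvg_smul hφx hψx', dvg_smul hψx hφx',
    dvg_smul hφx (hψx.fun_smul hu), ← lapl_eq_dvg_gradient, ← lapl_eq_dvg_gradient,
    advectionDiffusion, advectionDiffusionAdjoint, real_inner_smul_left,
    real_inner_comm (∇ φ x) (∇ ψ x)]
  ring

theorem tsupport_greenField_subset : tsupport (greenField u ψ φ) ⊆ tsupport ψ := by
  refine closure_minimal (fun x hx => ?_) (isClosed_tsupport ψ)
  contrapose! hx
  have hgrad : ∇ ψ x = 0 := by rw [gradient, fderiv_of_notMem_tsupport ℝ hx, map_zero]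
  simp [greenField, hgrad, image_eq_zero_of_notMem_tsupport hx]

theorem contDiff_greenField (hψ : ∀ x ∈ tsupport ψ, ContDiffAt ℝ 2 ψ x)
    (hφ : ∀ x ∈ tsupport ψ, ContDiffAt ℝ 2 φ x) (hu : ∀ x ∈ tsupport ψ, ContDiffAt ℝ 1 u x) :
    ContDiff ℝ 1 (greenField u ψ φ) :=
  contDiff_of_contDiffAt_tsupport fun x hx => by
    have hxψ : x ∈ tsupport ψ := tsupport_greenField_subset hx
    have hψx : ContDiffAt ℝ 1 ψ x := (hψ x hxψ).of_le one_le_two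
    have hφx : ContDiffAt ℝ 1 φ x := (hφ x hxψ).of_le one_le_two
    exact ((hφx.smul (contDiffAt_gradient (hψ x hxψ) one_add_one_eq_two.le)).sub
      (hψx.smul (contDiffAt_gradient (hφ x hxψ) one_add_one_eq_two.le))).add
      (hφx.smul (hψx.smul (hu x hxψ)))

theorem dvg_greenField_of_notMem_tsupport (hx : x ∉ tsupport ψ) :
    dvg (greenField u ψ φ) x = 0 := by
  have hzero : greenField u ψ φ =ᶠ[𝓝 x] 0 :=
    notMem_tsupport_iff_eventuallyEq.1 fun hx' => hx (tsupport_greenField_subset hx')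
  rw [dvg_congr hzero]
  simp [dvg]

end AdvectionDiffusion

section Comparison

variable {n : ℕ} {u : 𝔼 n → 𝔼 n} {φ h : 𝔼 n → ℝ} {x : 𝔼 n} {ε μ c D M : ℝ}

theorem tsupport_convexTruncation_comp_subset {X : Type*} [TopologicalSpace X] {f : X → ℝ}
    (hε : 0 < ε) (hf : Continuous f) :
    tsupport (convexTruncation ε ∘ f) ⊆ support f := by
  have hlevel : tsupport (convexTruncation ε ∘ f) ⊆ {y | ε ≤ f y} :=
    closure_minimal (fun y hy => le_of_not_ge fun hle => hy (convexTruncation_eq_zero hε hle))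
      (isClosed_le continuous_const hf)
  exact fun y hy => (hε.trans_le (hlevel hy)).ne'

theorem advectionDiffusionAdjoint_convexTruncation_comp_le (hε : 0 < ε)
    (hh : ContDiffAt ℝ 2 h x) (hu : DifferentiableAt ℝ u x) (hD : dvg u x ≤ D)
    (hμ : advectionDiffusionAdjoint u h x ≤ μ * h x) :
    advectionDiffusionAdjoint u (convexTruncation ε ∘ h) x ≤
      μ * convexTruncation ε (h x) + 2 * ε * |μ + D| := by
  obtain ⟨hdefect, hdefect'⟩ := mul_deriv_convexTruncation_sub_mem_Icc hε (h x)
  have hderiv := deriv_convexTruncation_nonneg hε.ne' (h x)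
  have hconvex := mul_nonneg (deriv_deriv_convexTruncation_nonneg hε (h x)) (sq_nonneg ‖∇ h x‖)
  rw [advectionDiffusionAdjoint_comp (contDiff_convexTruncation ε (m := 2)).contDiffAt hh hu]
  set K := convexTruncation ε (h x)
  set K' := deriv (convexTruncation ε) (h x)
  calc K' * advectionDiffusionAdjoint u h x - _ + (h x * K' - K) * dvg u x
      ≤ K' * (μ * h x) + (h x * K' - K) * D := by
        linarith [mul_le_mul_of_nonneg_left hμ hderiv, mul_le_mul_of_nonneg_left hD hdefect]
    _ = μ * K + (h x * K' - K) * (μ + D) := by ring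
    _ ≤ μ * K + (h x * K' - K) * |μ + D| := by gcongr; exact le_abs_self _
    _ ≤ μ * K + 2 * ε * |μ + D| := by gcongr

theorem mul_sub_le_dvg_greenField_convexTruncation_comp (hε : 0 < ε)
    (hh : ContDiffAt ℝ 2 h x) (hφ : ContDiffAt ℝ 2 φ x) (hu : DifferentiableAt ℝ u x)
    (hD : dvg u x ≤ D) (hφ0 : 0 ≤ φ x) (hφM : φ x ≤ M) (hc : 0 ≤ c)
    (hμ : advectionDiffusionAdjoint u h x ≤ μ * h x)
    (hμφ : μ * φ x + c ≤ advectionDiffusion u φ x) :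
    c * h x - 2 * ε * (c + M * |μ + D|) ≤
      dvg (greenField u (convexTruncation ε ∘ h) φ) x := by
  have hcomp : ContDiffAt ℝ 2 (convexTruncation ε ∘ h) x :=
    (contDiff_convexTruncation ε (m := 2)).contDiffAt.comp x hh
  have hadjoint := advectionDiffusionAdjoint_convexTruncation_comp_le hε hh hu hD hμ
  rw [dvg_greenField hcomp hφ hu, Function.comp_apply]
  set K := convexTruncation ε (h x)
  calc c * h x - 2 * ε * (c + M * |μ + D|)
      = c * (h x - 2 * ε) - M * (2 * ε * |μ + D|) := by ring
    _ ≤ c * K - φ x * (2 * ε * |μ + D|) := by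
      gcongr
      exact sub_two_mul_le_convexTruncation hε _
    _ = K * (μ * φ x + c) - φ x * (μ * K + 2 * ε * |μ + D|) := by ring
    _ ≤ K * advectionDiffusion u φ x -
          φ x * advectionDiffusionAdjoint u (convexTruncation ε ∘ h) x := by
      gcongr
      exact convexTruncation_nonneg hε.le _

theorem mul_integral_le_of_le_dvg {F : 𝔼 n → 𝔼 n} {e : ℝ} (hcont : Continuous h)
    (hsupp : HasCompactSupport h) (hF : ContDiff ℝ 1 F) (hFsupp : HasCompactSupport F)
    (hle : ∀ x ∈ support h, c * h x - e ≤ dvg F x)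
    (hnonneg : ∀ x ∉ support h, 0 ≤ dvg F x) :
    c * ∫ x, h x ≤ volume.real (support h) * e := by
  set S := support h
  have hSmeas : MeasurableSet S := hcont.isOpen_support.measurableSet
  have hSfin : volume S ≠ ⊤ :=
    ((measure_mono (subset_tsupport h)).trans_lt hsupp.measure_lt_top).ne
  have hint : Integrable fun x => c * h x :=
    (hcont.integrable_of_hasCompactSupport hsupp).const_mul c
  have hint' : Integrable (S.indicator fun _ => e) :=
    (integrable_indicator_iff hSmeas).2 (integrableOn_const hSfin)
  have hle' : ∀ x, c * h x - S.indicator (fun _ => e) x ≤ dvg F x := by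
    intro x
    by_cases hx : x ∈ S
    · simpa only [indicator_of_mem hx] using hle x hx
    · simpa only [indicator_of_notMem hx, Function.notMem_support.1 hx, mul_zero, sub_zero]
        using hnonneg x hx
  have hmono := integral_mono (hint.sub hint') (integrable_dvg hF hFsupp) hle'
  rwa [integral_dvg_eq_zero hF hFsupp, integral_sub' hint hint', integral_const_mul,
    integral_indicator_const _ hSmeas, smul_eq_mul, sub_nonpos] at hmono

theorem mul_integral_le_of_adjoint_subsolution (hε : 0 < ε) (hcont : Continuous h)
    (hsupp : HasCompactSupport h) (hh : ∀ x ∈ support h, ContDiffAt ℝ 2 h x)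
    (hφ : ∀ x ∈ support h, ContDiffAt ℝ 2 φ x)
    (hu : ∀ x ∈ support h, ContDiffAt ℝ 1 u x)
    (hD : ∀ x ∈ support h, dvg u x ≤ D)
    (hφ0 : ∀ x ∈ support h, 0 ≤ φ x) (hφM : ∀ x ∈ support h, φ x ≤ M)
    (hc : 0 ≤ c)
    (hμ : ∀ x ∈ support h, advectionDiffusionAdjoint u h x ≤ μ * h x)
    (hμφ : ∀ x ∈ support h, μ * φ x + c ≤ advectionDiffusion u φ x) :
    c * ∫ x, h x ≤ volume.real (support h) * (2 * ε * (c + M * |μ + D|)) := by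
  set S := support h
  set ψ := convexTruncation ε ∘ h
  have hψS : tsupport ψ ⊆ S := tsupport_convexTruncation_comp_subset hε hcont
  have hψsupp : HasCompactSupport ψ := hsupp.comp_left (convexTruncation_eq_zero hε hε.le)
  have hψ : ∀ x ∈ S, ContDiffAt ℝ 2 ψ x := fun x hx =>
    (contDiff_convexTruncation ε (m := 2)).contDiffAt.comp x (hh x hx)
  have hG : ContDiff ℝ 1 (greenField u ψ φ) :=
    contDiff_greenField (fun x hx => hψ x (hψS hx)) (fun x hx => hφ x (hψS hx))
      fun x hx => hu x (hψS hx)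
  have hGsupp : HasCompactSupport (greenField u ψ φ) :=
    hψsupp.of_isClosed_subset (isClosed_tsupport _) tsupport_greenField_subset
  refine mul_integral_le_of_le_dvg hcont hsupp hG hGsupp (fun x hx => ?_) fun x hx => ?_
  · exact mul_sub_le_dvg_greenField_convexTruncation_comp hε (hh x hx) (hφ x hx)
      ((hu x hx).differentiableAt one_ne_zero) (hD x hx) (hφ0 x hx) (hφM x hx) hc (hμ x hx)
      (hμφ x hx)
  · exact (dvg_greenField_of_notMem_tsupport fun hxψ => hx (hψS hxψ)).ge

theorem exists_advectionDiffusion_lt (hcont : Continuous h) (hsupp : HasCompactSupport h)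
    (hnonneg : 0 ≤ h) (hne : h ≠ 0) (hh : ∀ x ∈ support h, ContDiffAt ℝ 2 h x)
    (hφ : ∀ x ∈ support h, ContDiffAt ℝ 2 φ x)
    (hu : ∀ x ∈ support h, ContDiffAt ℝ 1 u x)
    (hdvg : BddAbove (dvg u '' support h))
    (hφ0 : ∀ x ∈ support h, 0 ≤ φ x) (hφb : BddAbove (φ '' support h))
    (hμ : ∀ x ∈ support h, advectionDiffusionAdjoint u h x ≤ μ * h x) (hc : 0 < c) :
    ∃ x ∈ support h, advectionDiffusion u φ x < μ * φ x + c := by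
  by_contra! hμφ
  obtain ⟨D, hD⟩ := hdvg
  obtain ⟨M, hM⟩ := hφb
  obtain ⟨x₀, hx₀⟩ := Function.ne_iff.1 hne
  have hpos : 0 < c * ∫ x, h x :=
    mul_pos hc (hcont.integral_pos_of_hasCompactSupport_nonneg_nonzero hsupp hnonneg hx₀)
  obtain ⟨ε, hε, hlt⟩ := exists_pos_mul_lt hpos
    (volume.real (support h) * (2 * (c + M * |μ + D|)))
  have hle := mul_integral_le_of_adjoint_subsolution hε hcont hsupp hh hφ hu
    (forall_mem_image.1 hD) hφ0 (forall_mem_image.1 hM) hc.le hμ hμφ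
  linarith

end Comparison

theorem add_mul_sub_le_of_convexOn {S : Set ℝ} {f : ℝ → ℝ} {f' a s : ℝ} (hf : ConvexOn ℝ S f)
    (ha : a ∈ S) (hs : s ∈ S) (has : a ≤ s) (hf' : HasDerivWithinAt f f' S a) :
    f a + f' * (s - a) ≤ f s := by
  rcases has.eq_or_lt with rfl | hlt
  · simp
  · have hslope := hf.le_slope_of_hasDerivWithinAt ha hs hlt hf'
    rw [slope_def_field, le_div_iff₀ (sub_pos.2 hlt)] at hslope
    linarith

theorem no_solution_above_adjoint_eigenvalue_general {n : ℕ} {Ω : Set (𝔼 n)} (hΩo : IsOpen Ω)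
    (hΩb : Bornology.IsBounded Ω) {u : 𝔼 n → 𝔼 n} (hu : ∀ x ∈ Ω, ContDiffAt ℝ 1 u x)
    (hdvg : BddAbove (dvg u '' Ω)) {g : ℝ → ℝ} {g' : ℝ} (hg0 : 0 < g 0)
    (hgconv : ConvexOn ℝ (Ici 0) g) (hg' : HasDerivWithinAt g g' (Ici 0) 0)
    {μ : ℝ} {η : 𝔼 n → ℝ} (hηreg : ∀ x ∈ Ω, ContDiffAt ℝ 2 η x)
    (hηcont : ContinuousOn η (closure Ω)) (hηnonneg : ∀ x ∈ Ω, 0 ≤ η x)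
    (hηne : ∃ x ∈ Ω, η x ≠ 0) (hηbd : ∀ x ∈ frontier Ω, η x = 0)
    (hηsub : ∀ x ∈ Ω, advectionDiffusionAdjoint u η x ≤ μ * η x)
    {lam : ℝ} (hlam : 0 < lam) (hμlam : μ ≤ lam * g') :
    ¬ ∃ φ : 𝔼 n → ℝ, (∀ x ∈ Ω, ContDiffAt ℝ 2 φ x) ∧ (∀ x ∈ Ω, 0 ≤ φ x) ∧
      BddAbove (φ '' Ω) ∧ ∀ x ∈ Ω, lam * g (φ x) ≤ advectionDiffusion u φ x := by
  rintro ⟨φ, hφreg, hφ0, hφb, hφsuper⟩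
  set h := Ω.indicator η
  have hsub : support h ⊆ Ω := support_indicator_subset
  have hηh : ∀ x ∈ Ω, h =ᶠ[𝓝 x] η := fun x hx =>
    eqOn_indicator.eventuallyEq_of_mem (hΩo.mem_nhds hx)
  have hsupp : HasCompactSupport h :=
    .of_support_subset_isCompact hΩb.isCompact_closure (hsub.trans subset_closure)
  have hne : h ≠ 0 := by
    obtain ⟨x, hx, hηx⟩ := hηne
    exact Function.ne_iff.2 ⟨x, by rwa [(hηh x hx).eq_of_nhds]⟩
  have hμh : ∀ x ∈ Ω, advectionDiffusionAdjoint u h x ≤ μ * h x := fun x hx => by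
    rw [advectionDiffusionAdjoint_congr (hηh x hx), (hηh x hx).eq_of_nhds]
    exact hηsub x hx
  obtain ⟨x, hx, hlt⟩ := exists_advectionDiffusion_lt (continuous_indicator hηbd hηcont) hsupp
    (indicator_nonneg hηnonneg) hne
    (fun x hx => (hηreg x (hsub hx)).congr_of_eventuallyEq (hηh x (hsub hx)))
    (fun x hx => hφreg x (hsub hx)) (fun x hx => hu x (hsub hx)) (hdvg.mono (image_mono hsub))
    (fun x hx => hφ0 x (hsub hx)) (hφb.mono (image_mono hsub)) (fun x hx => hμh x (hsub hx))
    (mul_pos hlam hg0)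
  have hφx : 0 ≤ φ x := hφ0 x (hsub hx)
  have htangent : g 0 + g' * (φ x - 0) ≤ g (φ x) :=
    add_mul_sub_le_of_convexOn hgconv self_mem_Ici hφx hφx hg'
  refine hlt.not_ge ?_
  calc μ * φ x + lam * g 0 ≤ lam * g' * φ x + lam * g 0 := by gcongr
    _ = lam * (g 0 + g' * (φ x - 0)) := by ring
    _ ≤ lam * g (φ x) := by gcongr
    _ ≤ advectionDiffusion u φ x := hφsuper x (hsub hx)

/-- If the adjoint eigenvalue problem
`-Δη - div(u η) = μ η` admits a positive principal eigenfunction `η` with eigenvalue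
`μ > 0`, then for every `λ > μ / g'(0)` there is no nonnegative classical solution of
the explosion problem at parameter `λ`. -/
theorem no_solution_above_adjoint_eigenvalue {n : ℕ} (Ω : Set (EuclideanSpace ℝ (Fin n)))
    (hΩo : IsOpen Ω) (hΩc : IsConnected Ω) (hΩb : Bornology.IsBounded Ω)
    (u : EuclideanSpace ℝ (Fin n) → EuclideanSpace ℝ (Fin n))
    (hu : ContDiffOn ℝ 1 u (closure Ω))
    (g : ℝ → ℝ) (hg : ContDiff ℝ 2 g) (hg0 : 0 < g 0) (hg0' : 0 < deriv g 0)
    (hgmono : StrictMonoOn g (Ici 0)) (hgconv : ConvexOn ℝ (Ici 0) g)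
    (μ : ℝ) (hμ : 0 < μ) (η : EuclideanSpace ℝ (Fin n) → ℝ)
    (hηreg : ∀ x ∈ Ω, ContDiffAt ℝ 2 η x)
    (hηcont : ContinuousOn η (closure Ω))
    (hηpos : ∀ x ∈ Ω, 0 < η x)
    (hηbd : ∀ x ∈ frontier Ω, η x = 0)
    (hηeq : ∀ x ∈ Ω, -lapl η x - dvg (fun y => η y • u y) x = μ * η x) :
    ∀ lam : ℝ, μ / deriv g 0 < lam → ¬ ∃ φ, IsNonnegSol Ω u g lam φ := by
  rintro lam hlam ⟨φ, ⟨hφreg, hφcont, hφeq, -⟩, hφ0⟩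
  have hu' : ∀ x ∈ Ω, ContDiffAt ℝ 1 u x := fun x hx =>
    hu.contDiffAt (mem_of_superset (hΩo.mem_nhds hx) subset_closure)
  have hg' : HasDerivWithinAt g (deriv g 0) (Ici 0) 0 :=
    (hg.differentiable two_ne_zero 0).hasDerivAt.hasDerivWithinAt
  have hφb : BddAbove (φ '' Ω) :=
    (hΩb.isCompact_closure.bddAbove_image hφcont).mono (image_mono subset_closure)
  exact no_solution_above_adjoint_eigenvalue_general hΩo hΩb hu' (bddAbove_dvg_image hΩo hΩb hu)
    hg0 hgconv hg' hηreg hηcont (fun x hx => (hηpos x hx).le)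
    (hΩc.nonempty.imp fun x hx => ⟨hx, (hηpos x hx).ne'⟩) hηbd (fun x hx => (hηeq x hx).le)
    ((div_pos hμ hg0').trans hlam) ((div_lt_iff₀ hg0').1 hlam).le
    ⟨φ, hφreg, hφ0, hφb, fun x hx => (hφeq x hx).ge⟩
end
end

section
/- Let 0 < λ₀ < λ₁, set ρ = λ₀/λ₁, let h(s) = ∫₀^s ds'/g(s') and Φ(s) = h⁻¹(ρ h(s)), and let φ₁ be a positive classical solution of the explosion problem at parameter λ₁. Then φ̄ = Φ ∘ φ₁ satisfies −Δφ̄(x) + ⟨u(x), ∇φ̄(x)⟩ ≥ λ₀ g(φ̄(x)) for every x ∈ Ω and φ̄ = 0 on ∂Ω; that is, φ̄ is a supersolution of the explosion problem at parameter λ₀. -/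
open Set MeasureTheory
open scoped RealInnerProductSpace

noncomputable section

/-! The function `Φ` is the flow of `y' = g(y)` run on a clock slowed down by the factor `ρ`, so
`Φ' = ρ g(Φ) / g` and `Φ'' = ρ g(Φ) (ρ g'(Φ) - g') / g²`. Since `Φ(s) ≤ s` and `g` is increasing
and convex, `ρ g'(Φ(s)) ≤ g'(s)`, so `Φ` is concave. Composing with a concave function only adds the
nonnegative term `-Φ''(φ) |∇φ|²` to `Φ'(φ) (-Δφ + ⟨u, ∇φ⟩)`, and
`Φ'(φ) λ₁ g(φ) = ρ λ₁ g(Φ(φ)) = λ₀ g(Φ(φ))`. -/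

section ChainRule

open Filter Topology

theorem fderiv_fderiv_comp_apply {𝕜 E : Type*} [NontriviallyNormedField 𝕜]
    [NormedAddCommGroup E] [NormedSpace 𝕜 E] {φ : E → 𝕜} {Φ Φ' : 𝕜 → 𝕜} {Φ'' : 𝕜} {x : E}
    (hφ : ContDiffAt 𝕜 2 φ x) (hΦ : ∀ᶠ s in 𝓝 (φ x), HasDerivAt Φ (Φ' s) s)
    (hΦ' : HasDerivAt Φ' Φ'' (φ x)) (v w : E) :
    fderiv 𝕜 (fun y => fderiv 𝕜 (Φ ∘ φ) y v) x w =
      Φ' (φ x) * fderiv 𝕜 (fun y => fderiv 𝕜 φ y v) x w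
        + Φ'' * (fderiv 𝕜 φ x v * fderiv 𝕜 φ x w) := by
  have hφx : DifferentiableAt 𝕜 φ x := hφ.differentiableAt two_ne_zero
  have hfirst : (fun y => fderiv 𝕜 (Φ ∘ φ) y v) =ᶠ[𝓝 x] fun y => Φ' (φ y) * fderiv 𝕜 φ y v := by
    filter_upwards [hφ.eventually (by simp), hφx.continuousAt.eventually hΦ] with y hφy hΦy
    have hchain := hΦy.comp_hasFDerivAt y (hφy.differentiableAt two_ne_zero).hasFDerivAt
    simp [hchain.fderiv]
  have hφ' : DifferentiableAt 𝕜 (fun y => fderiv 𝕜 φ y v) x :=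
    ((hφ.fderiv_right (m := 1) (by norm_num)).differentiableAt one_ne_zero).clm_apply
      (differentiableAt_const v)
  have hprod : HasFDerivAt (fun y => Φ' (φ y) * fderiv 𝕜 φ y v) _ x :=
    (hΦ'.comp_hasFDerivAt x hφx.hasFDerivAt).mul hφ'.hasFDerivAt
  rw [hfirst.fderiv_eq, hprod.fderiv]
  simp only [Function.comp_apply, add_apply, smul_apply, smul_eq_mul]
  ring

theorem gradient_comp_s8 {F : Type*} [NormedAddCommGroup F] [InnerProductSpace ℝ F] [CompleteSpace F]
    {φ : F → ℝ} {Φ : ℝ → ℝ} {c : ℝ} {x : F} (hΦ : HasDerivAt Φ c (φ x))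
    (hφ : DifferentiableAt ℝ φ x) : gradient (Φ ∘ φ) x = c • gradient φ x := by
  rw [gradient, (hΦ.comp_hasFDerivAt x hφ.hasFDerivAt).fderiv, map_smul, gradient]

variable {n : ℕ} {φ : EuclideanSpace ℝ (Fin n) → ℝ} {Φ Φ' : ℝ → ℝ} {Φ'' : ℝ}
  {x : EuclideanSpace ℝ (Fin n)}

theorem lapl_comp_s8 (hφ : ContDiffAt ℝ 2 φ x) (hΦ : ∀ᶠ s in 𝓝 (φ x), HasDerivAt Φ (Φ' s) s)
    (hΦ' : HasDerivAt Φ' Φ'' (φ x)) :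
    lapl (Φ ∘ φ) x = Φ' (φ x) * lapl φ x + Φ'' * ‖gradient φ x‖ ^ 2 := by
  have hnorm : ‖gradient φ x‖ ^ 2 = ∑ i, fderiv ℝ φ x (EuclideanSpace.single i 1) *
      fderiv ℝ φ x (EuclideanSpace.single i 1) := by
    simp only [← (EuclideanSpace.basisFun (Fin n) ℝ).sum_sq_inner_left (gradient φ x),
      EuclideanSpace.basisFun_apply, inner_gradient_left, sq]
  simp only [lapl, hnorm, fderiv_fderiv_comp_apply hφ hΦ hΦ', Finset.sum_add_distrib,
    Finset.mul_sum]

theorem mul_neg_lapl_add_inner_gradient_le_comp (hφ : ContDiffAt ℝ 2 φ x)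
    (hΦ : ∀ᶠ s in 𝓝 (φ x), HasDerivAt Φ (Φ' s) s) (hΦ' : HasDerivAt Φ' Φ'' (φ x))
    (hΦ'' : Φ'' ≤ 0) (v : EuclideanSpace ℝ (Fin n)) :
    Φ' (φ x) * (-lapl φ x + ⟪v, gradient φ x⟫) ≤
      -lapl (Φ ∘ φ) x + ⟪v, gradient (Φ ∘ φ) x⟫ := by
  have hconcave : Φ'' * ‖gradient φ x‖ ^ 2 ≤ 0 :=
    mul_nonpos_of_nonpos_of_nonneg hΦ'' (sq_nonneg _)
  rw [lapl_comp_s8 hφ hΦ hΦ', gradient_comp_s8 hΦ.self_of_nhds (hφ.differentiableAt two_ne_zero),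
    inner_smul_right]
  linarith

end ChainRule

/-- The function `h(s) = ∫₀^s dt / g(t)`: the time the flow of `y' = g(y)` takes from `0` to `s`. -/
def travelTime (g : ℝ → ℝ) (s : ℝ) : ℝ := ∫ t in (0 : ℝ)..s, 1 / g t

/-- The function `Φ(s) = h⁻¹(ρ h(s))`, where `h` is `travelTime g`. The argument `k` stands for
`h⁻¹`; only its values on `h([0, ∞))` are meaningful. -/
def timeRescaling (g k : ℝ → ℝ) (ρ s : ℝ) : ℝ := k (ρ * travelTime g s)

section TravelTime

variable {g k : ℝ → ℝ} {ρ s : ℝ}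

@[simp]
theorem travelTime_zero (g : ℝ → ℝ) : travelTime g 0 = 0 := intervalIntegral.integral_same

theorem intervalIntegrable_one_div_of_pos (hg : ContinuousOn g (Ici 0))
    (hpos : ∀ t ∈ Ici 0, 0 < g t) (hs : 0 ≤ s) :
    IntervalIntegrable (fun t => 1 / g t) volume 0 s :=
  ContinuousOn.intervalIntegrable_of_Icc hs <|
    continuousOn_const.div (hg.mono Icc_subset_Ici_self) fun t ht => (hpos t ht.1).ne'

theorem travelTime_pos (hg : ContinuousOn g (Ici 0)) (hpos : ∀ t ∈ Ici 0, 0 < g t) (hs : 0 < s) :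
    0 < travelTime g s :=
  intervalIntegral.intervalIntegral_pos_of_pos_on
    (intervalIntegrable_one_div_of_pos hg hpos hs.le)
    (fun t ht => one_div_pos.2 (hpos t ht.1.le)) hs

theorem continuousOn_travelTime_Icc (hg : ContinuousOn g (Ici 0)) (hpos : ∀ t ∈ Ici 0, 0 < g t)
    (hs : 0 ≤ s) : ContinuousOn (travelTime g) (Icc 0 s) := by
  rw [← uIcc_of_le hs]
  exact intervalIntegral.continuousOn_primitive_interval'
    (intervalIntegrable_one_div_of_pos hg hpos hs) left_mem_uIcc

theorem hasStrictDerivAt_travelTime (hg : ContinuousOn g (Ici 0)) (hpos : ∀ t ∈ Ici 0, 0 < g t)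
    (hs : 0 < s) : HasStrictDerivAt (travelTime g) (1 / g s) s := by
  have hcont : ContinuousOn (fun t => 1 / g t) (Ici 0) :=
    continuousOn_const.div hg fun t ht => (hpos t ht).ne'
  exact intervalIntegral.integral_hasStrictDerivAt_right
    (intervalIntegrable_one_div_of_pos hg hpos hs.le)
    ((hcont.mono Ioi_subset_Ici_self).stronglyMeasurableAtFilter isOpen_Ioi s hs)
    (hcont.continuousAt (Ici_mem_nhds hs))

theorem timeRescaling_zero (hk : LeftInvOn k (travelTime g) (Ici 0)) :
    timeRescaling g k ρ 0 = 0 := by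
  simpa [timeRescaling] using hk self_mem_Ici

theorem exists_mem_Ioc_travelTime_eq_mul (hg : ContinuousOn g (Ici 0))
    (hpos : ∀ t ∈ Ici 0, 0 < g t) (hρ : ρ ∈ Ioc 0 1) (hs : 0 < s) :
    ∃ p ∈ Ioc 0 s, travelTime g p = ρ * travelTime g s := by
  have htime := travelTime_pos hg hpos hs
  have hmem : ρ * travelTime g s ∈ Ioc (travelTime g 0) (travelTime g s) := by
    rw [travelTime_zero]
    exact ⟨mul_pos hρ.1 htime, mul_le_of_le_one_left htime.le hρ.2⟩
  exact intermediate_value_Ioc hs.le (continuousOn_travelTime_Icc hg hpos hs.le) hmem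

theorem timeRescaling_mem_Ioc (hg : ContinuousOn g (Ici 0)) (hpos : ∀ t ∈ Ici 0, 0 < g t)
    (hk : LeftInvOn k (travelTime g) (Ici 0)) (hρ : ρ ∈ Ioc 0 1) (hs : 0 < s) :
    timeRescaling g k ρ s ∈ Ioc 0 s := by
  obtain ⟨p, hp, hp_time⟩ := exists_mem_Ioc_travelTime_eq_mul hg hpos hρ hs
  rwa [timeRescaling, ← hp_time, hk hp.1.le]

theorem travelTime_timeRescaling (hg : ContinuousOn g (Ici 0)) (hpos : ∀ t ∈ Ici 0, 0 < g t)
    (hk : LeftInvOn k (travelTime g) (Ici 0)) (hρ : ρ ∈ Ioc 0 1) (hs : 0 < s) :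
    travelTime g (timeRescaling g k ρ s) = ρ * travelTime g s := by
  obtain ⟨p, hp, hp_time⟩ := exists_mem_Ioc_travelTime_eq_mul hg hpos hρ hs
  rw [timeRescaling, ← hp_time, hk hp.1.le]

theorem hasDerivAt_timeRescaling (hg : ContinuousOn g (Ici 0)) (hpos : ∀ t ∈ Ici 0, 0 < g t)
    (hk : LeftInvOn k (travelTime g) (Ici 0)) (hρ : ρ ∈ Ioc 0 1) (hs : 0 < s) :
    HasDerivAt (timeRescaling g k ρ) (ρ * g (timeRescaling g k ρ s) / g s) s := by
  have hΦ := (timeRescaling_mem_Ioc hg hpos hk hρ hs).1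
  have hinverse : HasStrictDerivAt k (1 / g (timeRescaling g k ρ s))⁻¹
      (travelTime g (timeRescaling g k ρ s)) := by
    refine (hasStrictDerivAt_travelTime hg hpos hΦ).to_local_left_inverse
      (one_div_pos.2 (hpos _ hΦ.le)).ne' ?_
    filter_upwards [Ici_mem_nhds hΦ] with t ht using hk ht
  rw [travelTime_timeRescaling hg hpos hk hρ hs] at hinverse
  have hscaled := (hasStrictDerivAt_travelTime hg hpos hs).hasDerivAt.const_mul ρ
  refine (hinverse.hasDerivAt.comp s hscaled).congr_deriv ?_
  rw [one_div, inv_inv]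
  ring

theorem hasDerivAt_mul_timeRescaling_div (hg : DifferentiableOn ℝ g (Ici 0))
    (hpos : ∀ t ∈ Ici 0, 0 < g t) (hk : LeftInvOn k (travelTime g) (Ici 0)) (hρ : ρ ∈ Ioc 0 1)
    (hs : 0 < s) :
    HasDerivAt (fun t => ρ * g (timeRescaling g k ρ t) / g t)
      (ρ * g (timeRescaling g k ρ s) *
        (ρ * deriv g (timeRescaling g k ρ s) - deriv g s) / g s ^ 2) s := by
  have hΦ := (timeRescaling_mem_Ioc hg.continuousOn hpos hk hρ hs).1
  have hg' {t : ℝ} (ht : 0 < t) : HasDerivAt g (deriv g t) t :=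
    (hg.differentiableAt (Ici_mem_nhds ht)).hasDerivAt
  have hnum := ((hg' hΦ).comp s
    (hasDerivAt_timeRescaling hg.continuousOn hpos hk hρ hs)).const_mul ρ
  have hgs : g s ≠ 0 := (hpos s hs.le).ne'
  refine (hnum.div (hg' hs) hgs).congr_deriv ?_
  simp only [Function.comp_apply]
  field_simp

end TravelTime

theorem mul_deriv_le_deriv_of_mem_Ioc {g : ℝ → ℝ} {ρ s t : ℝ} (hg : DifferentiableOn ℝ g (Ici 0))
    (hmono : MonotoneOn g (Ici 0)) (hconv : ConvexOn ℝ (Ici 0) g) (hρ : ρ ≤ 1)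
    (ht : t ∈ Ioc 0 s) : ρ * deriv g t ≤ deriv g s := by
  have hderiv_nonneg : 0 ≤ deriv g t := by
    rw [← derivWithin_of_mem_nhds (Ici_mem_nhds ht.1)]
    exact hmono.derivWithin_nonneg
  have hderiv_mono : MonotoneOn (deriv g) (Ioi 0) :=
    (hconv.subset Ioi_subset_Ici_self (convex_Ioi 0)).monotoneOn_deriv
      fun r hr => hg.differentiableAt (Ici_mem_nhds hr)
  calc ρ * deriv g t ≤ deriv g t := mul_le_of_le_one_left hderiv_nonneg hρ
    _ ≤ deriv g s := hderiv_mono ht.1 (ht.1.trans_le ht.2) ht.2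

/-- `φ` satisfies the differential inequality `-Δφ + ⟨u, ∇φ⟩ ≥ λ g(φ)` in `Ω` and vanishes on `∂Ω`,
as a supersolution of the explosion problem does. Regularity is not part of this predicate. -/
def IsSupersol {n : ℕ} (Ω : Set (EuclideanSpace ℝ (Fin n)))
    (u : EuclideanSpace ℝ (Fin n) → EuclideanSpace ℝ (Fin n)) (g : ℝ → ℝ) (lam : ℝ)
    (φ : EuclideanSpace ℝ (Fin n) → ℝ) : Prop :=
  (∀ x ∈ Ω, lam * g (φ x) ≤ -lapl φ x + ⟪u x, gradient φ x⟫) ∧ ∀ x ∈ frontier Ω, φ x = 0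

theorem IsClassicalSol.isSupersol {n : ℕ} {Ω : Set (EuclideanSpace ℝ (Fin n))}
    {u : EuclideanSpace ℝ (Fin n) → EuclideanSpace ℝ (Fin n)} {g : ℝ → ℝ} {lam : ℝ}
    {φ : EuclideanSpace ℝ (Fin n) → ℝ} (hφ : IsClassicalSol Ω u g lam φ) :
    IsSupersol Ω u g lam φ :=
  ⟨fun x hx => (hφ.2.2.1 x hx).ge, hφ.2.2.2⟩

section Supersolution

variable {n : ℕ} {g k : ℝ → ℝ} {φ : EuclideanSpace ℝ (Fin n) → ℝ}

theorem mul_neg_lapl_add_inner_gradient_le_timeRescaling_comp {ρ : ℝ}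
    {x : EuclideanSpace ℝ (Fin n)} (hg : DifferentiableOn ℝ g (Ici 0))
    (hpos : ∀ t ∈ Ici 0, 0 < g t) (hmono : MonotoneOn g (Ici 0)) (hconv : ConvexOn ℝ (Ici 0) g)
    (hk : LeftInvOn k (travelTime g) (Ici 0)) (hρ : ρ ∈ Ioc 0 1) (hφ : ContDiffAt ℝ 2 φ x)
    (hφpos : 0 < φ x) (v : EuclideanSpace ℝ (Fin n)) :
    ρ * g (timeRescaling g k ρ (φ x)) / g (φ x) * (-lapl φ x + ⟪v, gradient φ x⟫) ≤
      -lapl (timeRescaling g k ρ ∘ φ) x + ⟪v, gradient (timeRescaling g k ρ ∘ φ) x⟫ := by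
  have hΦ := timeRescaling_mem_Ioc hg.continuousOn hpos hk hρ hφpos
  refine mul_neg_lapl_add_inner_gradient_le_comp hφ ?_
    (hasDerivAt_mul_timeRescaling_div hg hpos hk hρ hφpos) ?_ v
  · filter_upwards [Ioi_mem_nhds hφpos] with t ht
    exact hasDerivAt_timeRescaling hg.continuousOn hpos hk hρ ht
  · have hslope := mul_deriv_le_deriv_of_mem_Ioc hg hmono hconv hρ.2 hΦ
    exact div_nonpos_of_nonpos_of_nonneg
      (mul_nonpos_of_nonneg_of_nonpos (mul_pos hρ.1 (hpos _ hΦ.1.le)).le (sub_nonpos.2 hslope))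
      (sq_nonneg _)

theorem composed_supersolution_general {Ω : Set (EuclideanSpace ℝ (Fin n))}
    {u : EuclideanSpace ℝ (Fin n) → EuclideanSpace ℝ (Fin n)}
    (hg : DifferentiableOn ℝ g (Ici 0)) (hg0 : 0 < g 0) (hmono : MonotoneOn g (Ici 0))
    (hconv : ConvexOn ℝ (Ici 0) g) {lam₀ lam₁ : ℝ} (hlam₀ : 0 < lam₀) (hlam : lam₀ ≤ lam₁)
    (hk : LeftInvOn k (travelTime g) (Ici 0)) (hφ : ∀ x ∈ Ω, ContDiffAt ℝ 2 φ x)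
    (hφpos : ∀ x ∈ Ω, 0 < φ x) (hsuper : IsSupersol Ω u g lam₁ φ) :
    IsSupersol Ω u g lam₀ (timeRescaling g k (lam₀ / lam₁) ∘ φ) := by
  have hlam₁ : 0 < lam₁ := hlam₀.trans_le hlam
  have hρ : lam₀ / lam₁ ∈ Ioc 0 1 := ⟨div_pos hlam₀ hlam₁, (div_le_one hlam₁).2 hlam⟩
  have hpos (t : ℝ) (ht : t ∈ Ici 0) : 0 < g t := hg0.trans_le (hmono self_mem_Ici ht ht)
  refine ⟨fun x hx => ?_, fun x hx => ?_⟩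
  · have hgφ := hpos _ (hφpos x hx).le
    have hΦ := (timeRescaling_mem_Ioc hg.continuousOn hpos hk hρ (hφpos x hx)).1
    set Φ := timeRescaling g k (lam₀ / lam₁)
    have hslope_nonneg : 0 ≤ lam₀ / lam₁ * g (Φ (φ x)) / g (φ x) :=
      div_nonneg (mul_nonneg hρ.1.le (hpos _ hΦ.le).le) hgφ.le
    calc lam₀ * g (Φ (φ x))
        = lam₀ / lam₁ * g (Φ (φ x)) / g (φ x) * (lam₁ * g (φ x)) := by field_simp
      _ ≤ lam₀ / lam₁ * g (Φ (φ x)) / g (φ x) * (-lapl φ x + ⟪u x, gradient φ x⟫) :=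
          mul_le_mul_of_nonneg_left (hsuper.1 x hx) hslope_nonneg
      _ ≤ -lapl (Φ ∘ φ) x + ⟪u x, gradient (Φ ∘ φ) x⟫ :=
          mul_neg_lapl_add_inner_gradient_le_timeRescaling_comp hg hpos hmono hconv hk hρ
            (hφ x hx) (hφpos x hx) (u x)
  · rw [Function.comp_apply, hsuper.2 x hx, timeRescaling_zero hk]

end Supersolution

/-- If `φ₁` is a positive classical solution at parameter `λ₁` and
`Φ(s) = h⁻¹((λ₀/λ₁) h(s))` with `h(s) = ∫₀^s ds'/g(s')`, then `φ̄ = Φ ∘ φ₁` is a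
supersolution of the explosion problem at parameter `λ₀ < λ₁`:
`-Δφ̄ + ⟨u, ∇φ̄⟩ ≥ λ₀ g(φ̄)` in `Ω` and `φ̄ = 0` on `∂Ω`. -/
theorem composed_supersolution {n : ℕ} (Ω : Set (EuclideanSpace ℝ (Fin n)))
    (hΩo : IsOpen Ω) (hΩc : IsConnected Ω) (hΩb : Bornology.IsBounded Ω)
    (u : EuclideanSpace ℝ (Fin n) → EuclideanSpace ℝ (Fin n))
    (hu : ContDiffOn ℝ 1 u (closure Ω))
    (g : ℝ → ℝ) (hg : ContDiff ℝ 2 g) (hg0 : 0 < g 0)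
    (hgmono : StrictMonoOn g (Ici 0)) (hgconv : ConvexOn ℝ (Ici 0) g)
    (hgint : IntegrableOn (fun s => 1 / g s) (Ici 0))
    (lam₀ lam₁ : ℝ) (hlam₀ : 0 < lam₀) (hlam : lam₀ < lam₁)
    (h : ℝ → ℝ) (hdef : ∀ s, h s = ∫ t in (0:ℝ)..s, 1 / g t)
    (hinv : ℝ → ℝ)
    (hinv_left : ∀ s : ℝ, 0 ≤ s → hinv (h s) = s)
    (hinv_right : ∀ t : ℝ, 0 ≤ t → t < ∫ s in Ici (0:ℝ), 1 / g s →
      h (hinv t) = t ∧ 0 ≤ hinv t)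
    (Φ : ℝ → ℝ) (hΦ : ∀ s, Φ s = hinv (lam₀ / lam₁ * h s))
    (φ₁ : EuclideanSpace ℝ (Fin n) → ℝ)
    (hφ₁ : IsClassicalSol Ω u g lam₁ φ₁) (hφ₁pos : ∀ x ∈ Ω, 0 < φ₁ x) :
    (∀ x ∈ Ω,
      lam₀ * g ((Φ ∘ φ₁) x) ≤ -lapl (Φ ∘ φ₁) x + ⟪u x, gradient (Φ ∘ φ₁) x⟫) ∧
    (∀ x ∈ frontier Ω, (Φ ∘ φ₁) x = 0) := by
  obtain rfl : h = travelTime g := funext hdef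
  obtain rfl : Φ = timeRescaling g hinv (lam₀ / lam₁) := funext hΦ
  exact composed_supersolution_general (hg.differentiable two_ne_zero).differentiableOn hg0
    hgmono.monotoneOn hgconv hlam₀ hlam.le hinv_left hφ₁.1 hφ₁pos hφ₁.isSupersol
end
end

section
/- Let B = B(0,1) ⊂ ℝ² be the open unit disc. For every n ≥ 1 and every μ ∈ ℝ, if φ is a C² function on B, continuous on the closed disc, positive in B, vanishing on the circle |x| = 1, and satisfying −Δφ(x) + 4n ⟨x, ∇φ(x)⟩ = μ φ(x) for all x ∈ B, then μ > 0; moreover there exist constants C > 0 and c > 0, independent of n, such that μ ≤ C e^{−c n}. In particular the principal eigenvalue μ_n of the operator −Δ + 4n x·∇ on B with Dirichlet boundary conditions tends to 0 as n → ∞. -/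
open Set MeasureTheory
open scoped RealInnerProductSpace

noncomputable section

/-!
Write `L f = -Δ f + A ⟨x, ∇f⟩`. Both bounds come from one comparison principle: if `ψ > 0` on
`closure U` and `f ≤ 0` on `∂U` is positive somewhere in `U`, then at a maximum point of `f / ψ`
the graph of `f` touches that of `t ψ` from below, with `t > 0` the maximal ratio, whence
`t L ψ ≤ L f` there. The test function is `w = 1 - exp (a (‖x‖² - R²))`, for which
`L w = 2 a exp (a (‖x‖² - R²)) (d + (2 a - A) ‖x‖²)` in dimension `d`.

For `a` and `R` large, `w` is a positive strict supersolution on the domain; comparing `φ` with it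
gives `μ > 0`. For `a = A / 8` and `R < 1`, comparing `w` with `φ` gives `μ w ≤ L w` at some point.
There `L w > 0`, which confines the point to `‖x‖² < 4 d / (3 A)`, where `w` is bounded below and
`L w` is exponentially small in `A`.
-/

section SecondOrder

open Filter Topology

lemma deriv_deriv_nonpos_of_isLocalMax {g : ℝ → ℝ} {a : ℝ} (hmax : IsLocalMax g a)
    (hg : ContinuousAt g a) : deriv (deriv g) a ≤ 0 := by
  by_contra! hpos
  have hmin : IsLocalMin g a := isLocalMin_of_deriv_deriv_pos hpos hmax.deriv_eq_zero hg
  have hconst : g =ᶠ[𝓝 a] fun _ => g a := by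
    filter_upwards [hmax, hmin] with t hle hge using le_antisymm hle hge
  have hzero : deriv (deriv g) a = 0 := by simpa using hconst.deriv.deriv_eq
  exact hpos.ne' hzero

lemma fderiv_fderiv_apply_self_nonpos_of_isLocalMax {E : Type*} [NormedAddCommGroup E]
    [NormedSpace ℝ E] {f : E → ℝ} {x : E} (hmax : IsLocalMax f x) (hf : ContDiffAt ℝ 2 f x)
    (v : E) : fderiv ℝ (fderiv ℝ f) x v v ≤ 0 := by
  set γ : ℝ → E := fun t => x + t • v
  have hγ0 : γ 0 = x := by simp [γ]
  have hγ (t : ℝ) : HasDerivAt γ v t := by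
    simpa only [one_smul] using ((hasDerivAt_id' t).smul_const v).const_add x
  have hγ_tendsto : Tendsto γ (𝓝 0) (𝓝 x) := hγ0 ▸ (hγ 0).continuousAt
  have hderiv : deriv (f ∘ γ) =ᶠ[𝓝 0] fun t => fderiv ℝ f (γ t) v := by
    filter_upwards [hγ_tendsto.eventually (hf.eventually (by simp))] with t ht
    exact ((ht.differentiableAt (by simp)).hasFDerivAt.comp_hasDerivAt t (hγ t)).deriv
  have hdf : HasFDerivAt (fderiv ℝ f) (fderiv ℝ (fderiv ℝ f) x) (γ 0) :=
    hγ0 ▸ ((hf.fderiv_right (m := 1) (by norm_num)).differentiableAt (by simp)).hasFDerivAt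
  have hderiv2 : deriv (deriv (f ∘ γ)) 0 = fderiv ℝ (fderiv ℝ f) x v v := by
    rw [hderiv.deriv_eq]
    simpa using ((hdf.comp_hasDerivAt 0 (hγ 0)).clm_apply (hasDerivAt_const 0 v)).deriv
  rw [← hderiv2]
  refine deriv_deriv_nonpos_of_isLocalMax ?_ ?_
  · filter_upwards [hγ_tendsto.eventually hmax] with t ht
    simpa [hγ0] using ht
  · exact ContinuousAt.comp (hγ0 ▸ hf.continuousAt) (hγ 0).continuousAt

end SecondOrder

section DriftLaplacian

open Bornology Topology
open scoped Gradient Laplacian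

variable {E : Type*} [NormedAddCommGroup E] [InnerProductSpace ℝ E] [FiniteDimensional ℝ E]

lemma laplacian_nonpos_of_isLocalMax {f : E → ℝ} {x : E} (hmax : IsLocalMax f x)
    (hf : ContDiffAt ℝ 2 f x) : Δ f x ≤ 0 := by
  rw [InnerProductSpace.laplacian_eq_iteratedFDeriv_stdOrthonormalBasis]
  refine Finset.sum_nonpos fun i _ => ?_
  simpa [iteratedFDeriv_two_apply] using fderiv_fderiv_apply_self_nonpos_of_isLocalMax hmax hf _

/-- The operator `-Δ + b · ∇` with drift field `b`, whose principal Dirichlet eigenvalue is studied.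
The sign makes it nonnegative at local maxima. -/
def driftLaplacian (b : E → E) (f : E → ℝ) (x : E) : ℝ :=
  -Δ f x + ⟪b x, ∇ f x⟫

lemma driftLaplacian_nonneg_of_isLocalMax (b : E → E) {f : E → ℝ} {x : E}
    (hmax : IsLocalMax f x) (hf : ContDiffAt ℝ 2 f x) : 0 ≤ driftLaplacian b f x := by
  have hgrad : ∇ f x = 0 := by simp [gradient, hmax.fderiv_eq_zero]
  simpa [driftLaplacian, hgrad] using laplacian_nonpos_of_isLocalMax hmax hf

lemma driftLaplacian_sub_smul (b : E → E) {f g : E → ℝ} {x : E} (hf : ContDiffAt ℝ 2 f x)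
    (hg : ContDiffAt ℝ 2 g x) (t : ℝ) :
    driftLaplacian b (f - t • g) x = driftLaplacian b f x - t * driftLaplacian b g x := by
  have hf' := hf.differentiableAt (by simp)
  have hg' := hg.differentiableAt (by simp)
  have hlap : Δ (f - t • g) x = Δ f x - t * Δ g x := by
    rw [hf.laplacian_sub (f₂ := t • g) (hg.const_smul t), InnerProductSpace.laplacian_smul t hg,
      smul_eq_mul]
  have hgrad : ∇ (f - t • g) x = ∇ f x - t • ∇ g x := by
    simp [gradient, fderiv_sub hf' (hg'.const_smul t), fderiv_const_smul hg']
  rw [driftLaplacian, hlap, hgrad, inner_sub_right, real_inner_smul_right]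
  simp only [driftLaplacian]
  ring

lemma exists_touching_le_driftLaplacian (b : E → E) {U : Set E} {f ψ : E → ℝ} (hU : IsOpen U)
    (hUb : IsBounded U) (hf : ContDiffOn ℝ 2 f U) (hfc : ContinuousOn f (closure U))
    (hψ : ContDiffOn ℝ 2 ψ U) (hψc : ContinuousOn ψ (closure U))
    (hψpos : ∀ x ∈ closure U, 0 < ψ x) (hfrontier : ∀ x ∈ frontier U, f x ≤ 0)
    (hfpos : ∃ x ∈ U, 0 < f x) :
    ∃ x ∈ U, ∃ t > 0, f x = t * ψ x ∧ t * driftLaplacian b ψ x ≤ driftLaplacian b f x := by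
  obtain ⟨y, hyU, hfy⟩ := hfpos
  have hy := subset_closure hyU
  obtain ⟨x, hx, hmax⟩ := hUb.isCompact_closure.exists_isMaxOn ⟨y, hy⟩
    (hfc.div hψc fun z hz => (hψpos z hz).ne')
  set t : ℝ := f x / ψ x
  have ht : 0 < t := (div_pos hfy (hψpos y hy)).trans_le (hmax hy)
  have hfx : f x = t * ψ x := (div_mul_cancel₀ _ (hψpos x hx).ne').symm
  have hxU : x ∈ U := by
    by_contra hxU
    have hfx_nonpos : f x ≤ 0 := hfrontier x (hU.frontier_eq ▸ ⟨hx, hxU⟩)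
    have hfx_pos : 0 < f x := hfx ▸ mul_pos ht (hψpos x hx)
    exact hfx_nonpos.not_gt hfx_pos
  have htouch : IsLocalMax (f - t • ψ) x := by
    filter_upwards [hU.mem_nhds hxU] with z hz
    have hz_le : f z ≤ t * ψ z := (div_le_iff₀ (hψpos z (subset_closure hz))).1
      (hmax (subset_closure hz))
    simpa [hfx] using hz_le
  have hf_at := hf.contDiffAt (hU.mem_nhds hxU)
  have hψ_at := hψ.contDiffAt (hU.mem_nhds hxU)
  have hL := driftLaplacian_nonneg_of_isLocalMax b htouch (hf_at.sub (hψ_at.const_smul t))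
  rw [driftLaplacian_sub_smul b hf_at hψ_at] at hL
  exact ⟨x, hxU, t, ht, hfx, sub_nonneg.1 hL⟩

/-- Barta's inequality, with a positive supersolution in place of the principal eigenfunction. -/
lemma exists_mul_le_driftLaplacian (b : E → E) {U V : Set E} {φ w : E → ℝ} {μ : ℝ}
    (hU : IsOpen U) (hUb : IsBounded U) (hUV : closure U ⊆ V) (hφ : ContDiffOn ℝ 2 φ V)
    (hφpos : ∀ x ∈ V, 0 < φ x) (hsuper : ∀ x ∈ V, μ * φ x ≤ driftLaplacian b φ x)
    (hw : ContDiffOn ℝ 2 w U) (hwc : ContinuousOn w (closure U))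
    (hfrontier : ∀ x ∈ frontier U, w x ≤ 0) (hwpos : ∃ x ∈ U, 0 < w x) :
    ∃ x ∈ U, 0 < w x ∧ μ * w x ≤ driftLaplacian b w x := by
  obtain ⟨x, hxU, t, ht, hwx, hL⟩ := exists_touching_le_driftLaplacian b hU hUb hw hwc
    (hφ.mono (subset_closure.trans hUV)) (hφ.continuousOn.mono hUV)
    (fun x hx => hφpos x (hUV hx)) hfrontier hwpos
  have hxV := hUV (subset_closure hxU)
  refine ⟨x, hxU, hwx ▸ mul_pos ht (hφpos x hxV), ?_⟩
  calc μ * w x = t * (μ * φ x) := by rw [hwx]; ring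
    _ ≤ t * driftLaplacian b φ x := by gcongr; exact hsuper x hxV
    _ ≤ driftLaplacian b w x := hL

end DriftLaplacian

section RadialFunctions

open Filter Topology Module
open scoped Gradient Laplacian

variable {E : Type*} [NormedAddCommGroup E] [InnerProductSpace ℝ E]

lemma hasFDerivAt_comp_norm_sq {h : ℝ → ℝ} {h' : ℝ} {x : E} (hh : HasDerivAt h h' (‖x‖ ^ 2)) :
    HasFDerivAt (fun y : E => h (‖y‖ ^ 2)) ((2 * h') • innerSL ℝ x) x := by
  refine (hh.comp_hasFDerivAt x (hasStrictFDerivAt_norm_sq x).hasFDerivAt).congr_fderiv ?_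
  module

lemma gradient_comp_norm_sq [CompleteSpace E] {h : ℝ → ℝ} {h' : ℝ} {x : E}
    (hh : HasDerivAt h h' (‖x‖ ^ 2)) :
    ∇ (fun y : E => h (‖y‖ ^ 2)) x = (2 * h') • x := by
  refine HasGradientAt.gradient ?_
  rw [hasGradientAt_iff_hasFDerivAt, map_smul]
  exact hasFDerivAt_comp_norm_sq hh

lemma laplacian_comp_norm_sq [FiniteDimensional ℝ E] {h h' : ℝ → ℝ} {h'' : ℝ} {x : E}
    (hh : ∀ᶠ s in 𝓝 (‖x‖ ^ 2), HasDerivAt h (h' s) s) (hh' : HasDerivAt h' h'' (‖x‖ ^ 2)) :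
    Δ (fun y : E => h (‖y‖ ^ 2)) x =
      4 * h'' * ‖x‖ ^ 2 + 2 * finrank ℝ E * h' (‖x‖ ^ 2) := by
  have hfderiv : fderiv ℝ (fun y : E => h (‖y‖ ^ 2)) =ᶠ[𝓝 x]
      fun y => (2 * h' (‖y‖ ^ 2)) • innerSL ℝ y := by
    have hcont : Tendsto (fun y : E => ‖y‖ ^ 2) (𝓝 x) (𝓝 (‖x‖ ^ 2)) :=
      (continuous_norm.pow 2).tendsto x
    filter_upwards [hcont.eventually hh] with y hy using (hasFDerivAt_comp_norm_sq hy).fderiv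
  have hfderiv2 (v : E) : fderiv ℝ (fderiv ℝ fun y : E => h (‖y‖ ^ 2)) x v v =
      4 * h'' * ⟪x, v⟫ ^ 2 + 2 * h' (‖x‖ ^ 2) * ‖v‖ ^ 2 := by
    rw [hfderiv.fderiv_eq, (((hasFDerivAt_comp_norm_sq hh').const_mul 2).fun_smul
      (innerSL ℝ (E := E)).hasFDerivAt).fderiv]
    simp only [add_apply, smul_apply, ContinuousLinearMap.smulRight_apply, innerSL_apply_apply ℝ,
      smul_eq_mul, real_inner_self_eq_norm_sq]
    ring
  rw [InnerProductSpace.laplacian_eq_iteratedFDeriv_stdOrthonormalBasis]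
  simp only [iteratedFDeriv_two_apply, Matrix.cons_val_zero, Matrix.cons_val_one, hfderiv2,
    OrthonormalBasis.norm_eq_one, Finset.sum_add_distrib, ← Finset.mul_sum,
    OrthonormalBasis.sum_sq_inner_left, one_pow, Finset.sum_const, Finset.card_univ,
    Fintype.card_fin, nsmul_eq_mul, mul_one]
  ring

end RadialFunctions

section GaussianBarrier

open Module
open scoped Gradient Laplacian

variable {E : Type*} [NormedAddCommGroup E]

/-- The radial test function `1 - exp (a (‖x‖² - R²))`, which for `a > 0` is positive exactly on
the ball of radius `R > 0`. -/
def gaussianBarrier (a R : ℝ) (x : E) : ℝ :=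
  1 - Real.exp (a * (‖x‖ ^ 2 - R ^ 2))

lemma gaussianBarrier_pos {a R : ℝ} (ha : 0 < a) {x : E} (hx : ‖x‖ < R) :
    0 < gaussianBarrier a R x := by
  have hsq : ‖x‖ ^ 2 < R ^ 2 := by gcongr
  rw [gaussianBarrier, sub_pos, Real.exp_lt_one_iff]
  exact mul_neg_of_pos_of_neg ha (sub_neg.2 hsq)

lemma gaussianBarrier_eq_zero (a : ℝ) {R : ℝ} {x : E} (hx : ‖x‖ = R) :
    gaussianBarrier a R x = 0 := by
  simp [gaussianBarrier, hx]

variable [InnerProductSpace ℝ E]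

lemma contDiff_gaussianBarrier (a R : ℝ) : ContDiff ℝ 2 (gaussianBarrier a R : E → ℝ) := by
  unfold gaussianBarrier
  have hsq : ContDiff ℝ 2 fun x : E => ‖x‖ ^ 2 := contDiff_norm_sq ℝ
  fun_prop

variable [FiniteDimensional ℝ E]

lemma driftLaplacian_gaussianBarrier (A a R : ℝ) (x : E) :
    driftLaplacian (fun y => A • y) (gaussianBarrier a R) x =
      2 * a * Real.exp (a * (‖x‖ ^ 2 - R ^ 2)) * (finrank ℝ E + (2 * a - A) * ‖x‖ ^ 2) := by
  set e : ℝ → ℝ := fun s => Real.exp (a * (s - R ^ 2))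
  have he (s : ℝ) : HasDerivAt e (a * e s) s := by
    simpa [e, mul_comm] using (((hasDerivAt_id s).sub_const (R ^ 2)).const_mul a).exp
  have hh (s : ℝ) : HasDerivAt (fun s => 1 - e s) (-(a * e s)) s := (he s).const_sub 1
  have hh' (s : ℝ) : HasDerivAt (fun s => -(a * e s)) (-(a * (a * e s))) s :=
    ((he s).const_mul a).neg
  change -Δ (fun y : E => 1 - e (‖y‖ ^ 2)) x + ⟪A • x, ∇ (fun y : E => 1 - e (‖y‖ ^ 2)) x⟫ = _
  rw [laplacian_comp_norm_sq (.of_forall hh) (hh' _), gradient_comp_norm_sq (hh _),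
    real_inner_smul_left, real_inner_smul_right, real_inner_self_eq_norm_sq]
  ring

end GaussianBarrier

lemma mul_exp_neg_le_two_mul_exp_neg_half (y : ℝ) :
    y * Real.exp (-y) ≤ 2 * Real.exp (-(y / 2)) := by
  have hhalf : y / 2 * Real.exp (-(y / 2)) ≤ 1 :=
    (Real.mul_exp_neg_le_exp_neg_one _).trans (Real.exp_le_one_iff.2 (by norm_num))
  calc y * Real.exp (-y) = 2 * (y / 2 * Real.exp (-(y / 2))) * Real.exp (-(y / 2)) := by
        rw [mul_assoc, mul_assoc, ← Real.exp_add]; ring_nf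
    _ ≤ 2 * 1 * Real.exp (-(y / 2)) := by gcongr
    _ = 2 * Real.exp (-(y / 2)) := by ring

section RadialDrift

open Module Bornology Metric
open scoped Gradient Laplacian

variable {E : Type*} [NormedAddCommGroup E] [InnerProductSpace ℝ E] [FiniteDimensional ℝ E]
  [Nontrivial E]

lemma pos_of_driftLaplacian_le {U : Set E} {f : E → ℝ} {A μ : ℝ} (hU : IsOpen U)
    (hUb : IsBounded U) (hf : ContDiffOn ℝ 2 f U) (hfc : ContinuousOn f (closure U))
    (hfrontier : ∀ x ∈ frontier U, f x ≤ 0) (hfpos : ∃ x ∈ U, 0 < f x)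
    (hsub : ∀ x ∈ U, driftLaplacian (fun y => A • y) f x ≤ μ * f x) : 0 < μ := by
  obtain ⟨R, hR⟩ := hUb.closure.subset_ball (0 : E)
  set a : ℝ := |A| + 1
  have ha : 0 < a := by positivity
  have hψ := contDiff_gaussianBarrier (E := E) a R
  have hψpos : ∀ x ∈ closure U, 0 < gaussianBarrier a R x := fun x hx =>
    gaussianBarrier_pos ha (mem_ball_zero_iff.1 (hR hx))
  obtain ⟨x, hx, t, ht, hfx, hL⟩ := exists_touching_le_driftLaplacian (fun y => A • y) hU hUb
    hf hfc hψ.contDiffOn hψ.continuous.continuousOn hψpos hfrontier hfpos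
  have hLψ : 0 < driftLaplacian (fun y => A • y) (gaussianBarrier a R) x := by
    have hd : (0 : ℝ) < finrank ℝ E := by exact_mod_cast finrank_pos
    have hA : 0 ≤ 2 * a - A := by linarith [le_abs_self A, abs_nonneg A]
    rw [driftLaplacian_gaussianBarrier]
    positivity
  have hfx_pos : 0 < f x := hfx ▸ mul_pos ht (hψpos x (subset_closure hx))
  have hμfx_pos : 0 < μ * f x := (mul_pos ht hLψ).trans_le (hL.trans (hsub x hx))
  exact pos_of_mul_pos_left hμfx_pos hfx_pos.le

lemma driftLaplacian_gaussianBarrier_le {A : ℝ} (hA : 2 * finrank ℝ E ≤ A) {x : E}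
    (hx : 0 < gaussianBarrier (A / 8) (9 / 10) x) :
    driftLaplacian (fun y => A • y) (gaussianBarrier (A / 8) (9 / 10)) x ≤
      930 * finrank ℝ E * Real.exp (-(A / 120)) * gaussianBarrier (A / 8) (9 / 10) x := by
  obtain hL | hL := le_or_gt
    (driftLaplacian (fun y => A • y) (gaussianBarrier (A / 8) (9 / 10)) x) 0
  · exact hL.trans (by positivity)
  have hd : (1 : ℝ) ≤ finrank ℝ E := by exact_mod_cast (finrank_pos : 0 < finrank ℝ E)
  have hA_pos : 0 < A := by linarith
  rw [driftLaplacian_gaussianBarrier] at hL ⊢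
  rw [gaussianBarrier]
  set e := Real.exp (A / 8 * (‖x‖ ^ 2 - (9 / 10) ^ 2)) with he
  have hx_sq : 3 / 4 * A * ‖x‖ ^ 2 < finrank ℝ E := by
    have hfactor := pos_of_mul_pos_right hL (by positivity)
    linarith
  -- The exponent is less than `d / 6 - 81 A / 800`, and `d / 6 ≤ A / 12`.
  have he_le : e ≤ Real.exp (-(A / 60)) := by
    rw [he, Real.exp_le_exp]
    linarith
  have he_gap : 1 ≤ 31 * (1 - e) := by
    have hexp : A / 60 + 1 ≤ Real.exp (A / 60) := Real.add_one_le_exp _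
    have hexp_neg : Real.exp (-(A / 60)) ≤ 30 / 31 := by
      rw [Real.exp_neg, inv_le_comm₀ (Real.exp_pos _) (by norm_num)]
      linarith
    linarith
  calc 2 * (A / 8) * e * (finrank ℝ E + (2 * (A / 8) - A) * ‖x‖ ^ 2)
      ≤ 2 * (A / 8) * e * finrank ℝ E := by
        gcongr
        linarith [mul_nonneg hA_pos.le (sq_nonneg ‖x‖)]
    _ ≤ 2 * (A / 8) * Real.exp (-(A / 60)) * finrank ℝ E := by gcongr
    _ = 15 * finrank ℝ E * (A / 60 * Real.exp (-(A / 60))) := by ring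
    _ ≤ 15 * finrank ℝ E * (2 * Real.exp (-(A / 60 / 2))) :=
        mul_le_mul_of_nonneg_left (mul_exp_neg_le_two_mul_exp_neg_half _) (by positivity)
    _ = 30 * finrank ℝ E * Real.exp (-(A / 120)) * 1 := by ring_nf
    _ ≤ 30 * finrank ℝ E * Real.exp (-(A / 120)) * (31 * (1 - e)) := by gcongr
    _ = 930 * finrank ℝ E * Real.exp (-(A / 120)) * (1 - e) := by ring

lemma le_mul_exp_of_le_driftLaplacian {φ : E → ℝ} {A μ : ℝ} (hA : 2 * finrank ℝ E ≤ A)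
    (hφ : ContDiffOn ℝ 2 φ (ball 0 1)) (hφpos : ∀ x ∈ ball (0 : E) 1, 0 < φ x)
    (hsuper : ∀ x ∈ ball (0 : E) 1, μ * φ x ≤ driftLaplacian (fun y => A • y) φ x) :
    μ ≤ 930 * finrank ℝ E * Real.exp (-(A / 120)) := by
  have hA_pos : 0 < A := by
    have hd : (0 : ℝ) < finrank ℝ E := by exact_mod_cast finrank_pos
    linarith
  have hw := contDiff_gaussianBarrier (E := E) (A / 8) (9 / 10)
  obtain ⟨x, -, hwx, hμ⟩ := exists_mul_le_driftLaplacian (fun y => A • y) (U := ball 0 (9 / 10))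
    isOpen_ball isBounded_ball
    (closure_ball_subset_closedBall.trans (closedBall_subset_ball (by norm_num)))
    hφ hφpos hsuper hw.contDiffOn hw.continuous.continuousOn
    (fun x hx => (gaussianBarrier_eq_zero _
      (mem_sphere_zero_iff_norm.1 (frontier_ball_subset_sphere hx))).le)
    ⟨0, by simp, gaussianBarrier_pos (by positivity) (by norm_num)⟩
  exact le_of_mul_le_mul_right (hμ.trans (driftLaplacian_gaussianBarrier_le hA hwx)) hwx

theorem radial_flow_eigenvalue_decay_general {φ : E → ℝ} {A μ : ℝ} (hA : 2 * finrank ℝ E ≤ A)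
    (hφ : ContDiffOn ℝ 2 φ (ball 0 1)) (hφc : ContinuousOn φ (closedBall 0 1))
    (hφpos : ∀ x ∈ ball (0 : E) 1, 0 < φ x) (hφzero : ∀ x, ‖x‖ = 1 → φ x = 0)
    (heigen : ∀ x ∈ ball (0 : E) 1, -Δ φ x + A * ⟪x, ∇ φ x⟫ = μ * φ x) :
    0 < μ ∧ μ ≤ 930 * finrank ℝ E * Real.exp (-(A / 120)) := by
  have hL : ∀ x ∈ ball (0 : E) 1, driftLaplacian (fun y => A • y) φ x = μ * φ x := by
    simpa only [driftLaplacian, real_inner_smul_left] using heigen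
  refine ⟨?_, le_mul_exp_of_le_driftLaplacian hA hφ hφpos fun x hx => (hL x hx).ge⟩
  have h0 : (0 : E) ∈ ball (0 : E) 1 := mem_ball_self one_pos
  exact pos_of_driftLaplacian_le isOpen_ball isBounded_ball hφ
    (hφc.mono closure_ball_subset_closedBall)
    (fun x hx => (hφzero x (mem_sphere_zero_iff_norm.1 (frontier_ball_subset_sphere hx))).le)
    ⟨0, h0, hφpos 0 h0⟩ fun x hx => (hL x hx).le

end RadialDrift

open Laplacian in
lemma lapl_eq_laplacian {n : ℕ} {φ : EuclideanSpace ℝ (Fin n) → ℝ} {x : EuclideanSpace ℝ (Fin n)}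
    (hφ : ContDiffAt ℝ 2 φ x) : lapl φ x = Δ φ x := by
  have hdφ : DifferentiableAt ℝ (fderiv ℝ φ) x :=
    (hφ.fderiv_right (m := 1) (by norm_num)).differentiableAt (by simp)
  rw [InnerProductSpace.laplacian_eq_iteratedFDeriv_orthonormalBasis φ
    (EuclideanSpace.basisFun (Fin n) ℝ)]
  simp [lapl, iteratedFDeriv_two_apply, fderiv_clm_apply hdφ]

/-- For the compressible radial flow `u_n(x) = 4n x` on the unit disc
`B(0,1) ⊂ ℝ²`, every Dirichlet principal eigenfunction–eigenvalue pair `(φ, μ)` of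
`-Δφ + 4n ⟨x, ∇φ⟩ = μ φ` with `φ > 0` in `B` has `μ > 0`, and `μ ≤ C e^{-c n}` with
constants `C, c > 0` independent of `n`; in particular `μ_n → 0` as `n → ∞`. -/
theorem radial_flow_eigenvalue_decay :
    ∃ C : ℝ, 0 < C ∧ ∃ c : ℝ, 0 < c ∧
      ∀ n : ℕ, 1 ≤ n → ∀ μ : ℝ, ∀ φ : EuclideanSpace ℝ (Fin 2) → ℝ,
        ContDiffOn ℝ 2 φ (Metric.ball (0 : EuclideanSpace ℝ (Fin 2)) 1) →
        ContinuousOn φ (Metric.closedBall (0 : EuclideanSpace ℝ (Fin 2)) 1) →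
        (∀ x ∈ Metric.ball (0 : EuclideanSpace ℝ (Fin 2)) 1, 0 < φ x) →
        (∀ x : EuclideanSpace ℝ (Fin 2), ‖x‖ = 1 → φ x = 0) →
        (∀ x ∈ Metric.ball (0 : EuclideanSpace ℝ (Fin 2)) 1,
          -lapl φ x + 4 * (n : ℝ) * ⟪x, gradient φ x⟫ = μ * φ x) →
        0 < μ ∧ μ ≤ C * Real.exp (-c * n) := by
  refine ⟨1860, by norm_num, 1 / 30, by norm_num, fun n hn μ φ hφ hφc hφpos hφzero heigen => ?_⟩
  have hfinrank : Module.finrank ℝ (EuclideanSpace ℝ (Fin 2)) = 2 := finrank_euclideanSpace_fin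
  have hA : 2 * (Module.finrank ℝ (EuclideanSpace ℝ (Fin 2)) : ℝ) ≤ 4 * n := by
    rw [hfinrank]
    norm_cast
    lia
  convert radial_flow_eigenvalue_decay_general hA hφ hφc hφpos hφzero fun x hx =>
    lapl_eq_laplacian (hφ.contDiffAt (Metric.isOpen_ball.mem_nhds hx)) ▸ heigen x hx using 3
  · rw [hfinrank]
    norm_num
  · ring_nf
end
end

section
/- Let B = B(0,1) ⊂ ℝ² be the open unit disc. There exist constants C > 0, c > 0 and n₀ ≥ 1 such that for every n ≥ n₀ there is a smooth function ψ : ℝ² → ℝ, not identically zero, compactly supported in B, satisfying ∫ |∇ψ|² dx + 4n² ∫ |x|² ψ(x)² dx ≤ (4n + C e^{−c n}) ∫ ψ(x)² dx. Consequently the infimum over nonzero smooth compactly supported test functions in B of the Rayleigh quotient (∫|∇ψ|² + 4n²∫|x|²ψ²)/∫ψ² is at most 4n + C e^{−cn}. -/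
open Set MeasureTheory

noncomputable section

/-!
Completing the square, `‖∇ψ‖² + 4t²‖x‖²ψ² = ‖∇ψ + 2tψx‖² - 2t D(ψ²)(x)`, and integrating by parts
the Euler derivative `D(ψ²)(x)` show that in dimension `d` the energy of `ψ` is
`2dt ∫ ψ² + ∫ ‖∇ψ + 2tψx‖²`. The operator `∇ + 2tx` annihilates the Gaussian `exp (-t‖x‖²)`, so for
a Gaussian multiplied by a cutoff `g` the excess over `2dt ∫ ψ²` is `∫ exp (-2t‖x‖²) ‖∇g‖²`. If
`g = 1` on the ball of radius `r`, this is `O(exp (-2tr²))`, whereas `∫ ψ²` is at least a constant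
times `exp (-2ts²)` for any `0 < s < r`; hence every rate `c < 2R²` is attained on the ball of
radius `R`.
-/

open Metric Module Topology

section Square

variable {X : Type*} [TopologicalSpace X] {f : X → ℝ}

lemma hasCompactSupport_sq (hc : HasCompactSupport f) : HasCompactSupport fun x ↦ f x ^ 2 :=
  hc.comp_left (zero_pow two_ne_zero)

lemma integrable_sq_of_hasCompactSupport [MeasurableSpace X] [OpensMeasurableSpace X]
    {μ : Measure X} [IsFiniteMeasureOnCompacts μ] (hf : Continuous f) (hc : HasCompactSupport f) :
    Integrable (fun x ↦ f x ^ 2) μ :=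
  (hf.pow 2).integrable_of_hasCompactSupport (hasCompactSupport_sq hc)

end Square

section EulerIdentity

variable {E F : Type*} [NormedAddCommGroup E] [NormedSpace ℝ E] [MeasurableSpace E] [BorelSpace E]
  [NormedAddCommGroup F] [NormedSpace ℝ F] {μ : Measure E} {f : E → F}

lemma integrable_strongDual_smul_fderiv [IsFiniteMeasureOnCompacts μ] (hf : ContDiff ℝ 1 f)
    (hc : HasCompactSupport f) (ℓ : StrongDual ℝ E) (v : E) :
    Integrable (fun x ↦ ℓ x • fderiv ℝ f x v) μ := by
  have hf' : Continuous fun x ↦ fderiv ℝ f x v :=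
    (hf.continuous_fderiv one_ne_zero).clm_apply continuous_const
  exact (ℓ.continuous.smul hf').integrable_of_hasCompactSupport (hc.fderiv_apply ℝ v).smul_left

variable [FiniteDimensional ℝ E] [μ.IsAddHaarMeasure]

lemma integral_strongDual_smul_fderiv (hf : ContDiff ℝ 1 f) (hc : HasCompactSupport f)
    (ℓ : StrongDual ℝ E) (v : E) :
    ∫ x, ℓ x • fderiv ℝ f x v ∂μ = -(ℓ v • ∫ x, f x ∂μ) := by
  rw [integral_smul_fderiv_eq_neg_fderiv_smul_of_integrable]
  · simp [integral_smul]
  · simpa using (hf.continuous.integrable_of_hasCompactSupport hc).fun_smul (ℓ v)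
  · exact integrable_strongDual_smul_fderiv hf hc ℓ v
  · exact (ℓ.continuous.smul hf.continuous).integrable_of_hasCompactSupport hc.smul_left
  · exact fun x _ ↦ ℓ.differentiableAt
  · exact fun x _ ↦ hf.differentiable one_ne_zero x

lemma integral_fderiv_apply_self (hf : ContDiff ℝ 1 f) (hc : HasCompactSupport f) :
    ∫ x, fderiv ℝ f x x ∂μ = -((finrank ℝ E : ℝ) • ∫ x, f x ∂μ) := by
  let b := finBasis ℝ E
  let ℓ (i : Fin (finrank ℝ E)) : StrongDual ℝ E := (b.coord i).toContinuousLinearMap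
  have expand (x : E) : fderiv ℝ f x x = ∑ i, ℓ i x • fderiv ℝ f x (b i) := by
    conv_lhs => rw [← b.sum_repr x, map_sum]
    simp [ℓ]
  calc ∫ x, fderiv ℝ f x x ∂μ
      = ∑ i, ∫ x, ℓ i x • fderiv ℝ f x (b i) ∂μ := by
        simp_rw [expand]
        exact integral_finsetSum _ fun i _ ↦ integrable_strongDual_smul_fderiv hf hc _ _
    _ = -((finrank ℝ E : ℝ) • ∫ x, f x ∂μ) := by
        simp_rw [integral_strongDual_smul_fderiv hf hc]
        simp [ℓ, Nat.cast_smul_eq_nsmul]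

end EulerIdentity

section Gradient

variable {𝕜 E : Type*} [RCLike 𝕜] [NormedAddCommGroup E] [InnerProductSpace 𝕜 E] [CompleteSpace E]
  {f : E → 𝕜}

lemma continuous_gradient (hf : ContDiff 𝕜 1 f) : Continuous (gradient f) :=
  (InnerProductSpace.toDual 𝕜 E).symm.continuous.comp (hf.continuous_fderiv one_ne_zero)

lemma hasCompactSupport_gradient (hf : HasCompactSupport f) : HasCompactSupport (gradient f) :=
  (hf.fderiv (𝕜 := 𝕜)).comp_left (map_zero (InnerProductSpace.toDual 𝕜 E).symm)

end Gradient

section GroundState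

variable {E : Type*} [NormedAddCommGroup E]

/-- The Gaussian `exp (-t‖x‖²)`, the unnormalized ground state of `-Δ + 4t²‖x‖²` when `t > 0`. -/
def groundState (t : ℝ) (x : E) : ℝ :=
  Real.exp (-t * ‖x‖ ^ 2)

lemma groundState_sq (t : ℝ) (x : E) : groundState t x ^ 2 = Real.exp (-(2 * t * ‖x‖ ^ 2)) := by
  rw [groundState, ← Real.exp_nat_mul]
  ring_nf

section Weight

variable [MeasurableSpace E] {μ : Measure E} {t r : ℝ}

lemma integral_groundState_sq_mul_le {h : E → ℝ} (ht : 0 ≤ t) (hr : 0 ≤ r) (hh : Integrable h μ)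
    (h_nonneg : 0 ≤ h) (h_zero : ∀ x ∈ ball 0 r, h x = 0) :
    ∫ x, groundState t x ^ 2 * h x ∂μ ≤ Real.exp (-(2 * t * r ^ 2)) * ∫ x, h x ∂μ := by
  rw [← integral_const_mul]
  refine integral_mono_of_nonneg (.of_forall fun x ↦ mul_nonneg (sq_nonneg _) (h_nonneg x))
    (hh.const_mul _) (.of_forall fun x ↦ ?_)
  by_cases hx : x ∈ ball 0 r
  · simp [h_zero x hx]
  · have hrx : r ≤ ‖x‖ := by simpa using hx
    have := h_nonneg x
    simp only [groundState_sq]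
    gcongr

lemma exp_mul_measureReal_ball_le_integral [OpensMeasurableSpace E] {g : E → ℝ} (ht : 0 ≤ t)
    (h_fin : μ (ball 0 r) ≠ ⊤) (hg : Integrable (fun x ↦ (groundState t x * g x) ^ 2) μ)
    (g_one : ∀ x ∈ ball 0 r, g x = 1) :
    Real.exp (-(2 * t * r ^ 2)) * μ.real (ball 0 r) ≤ ∫ x, (groundState t x * g x) ^ 2 ∂μ := by
  have pointwise : ∀ x ∈ ball 0 r, Real.exp (-(2 * t * r ^ 2)) ≤ (groundState t x * g x) ^ 2 := by
    intro x hx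
    have hxr : ‖x‖ ≤ r := (mem_ball_zero_iff.mp hx).le
    rw [g_one x hx, mul_one, groundState_sq]
    gcongr
  exact (setIntegral_ge_of_const_le_real measurableSet_ball h_fin pointwise hg.integrableOn).trans
    (setIntegral_le_integral hg (.of_forall fun x ↦ sq_nonneg _))

end Weight

variable [InnerProductSpace ℝ E]

lemma contDiff_groundState (t : ℝ) {n : WithTop ℕ∞} :
    ContDiff ℝ n (groundState t : E → ℝ) :=
  (contDiff_const.mul (contDiff_norm_sq ℝ)).exp

lemma hasFDerivAt_groundState (t : ℝ) (x : E) :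
    HasFDerivAt (groundState t) (-(2 * t * groundState t x) • innerSL ℝ x) x := by
  refine (((hasStrictFDerivAt_norm_sq x).hasFDerivAt.const_mul (-t)).exp).congr_fderiv ?_
  ext v
  simp [groundState]
  ring

end GroundState

section Annihilation

variable {E : Type*} [NormedAddCommGroup E] [InnerProductSpace ℝ E] [CompleteSpace E]

/-- The annihilation operator `∇ + 2tx` of the oscillator `-Δ + 4t²‖x‖²`, which kills
`groundState t`. -/
def annihilation (t : ℝ) (ψ : E → ℝ) (x : E) : E :=
  gradient ψ x + (2 * t * ψ x) • x

lemma norm_gradient_sq_add_potential (t : ℝ) {ψ : E → ℝ} {x : E} (hψ : DifferentiableAt ℝ ψ x) :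
    ‖gradient ψ x‖ ^ 2 + 4 * t ^ 2 * (‖x‖ ^ 2 * ψ x ^ 2) =
      ‖annihilation t ψ x‖ ^ 2 - 2 * t * fderiv ℝ (fun y ↦ ψ y ^ 2) x x := by
  have euler : fderiv ℝ (fun y ↦ ψ y ^ 2) x x = 2 * ψ x * inner ℝ (gradient ψ x) x := by
    simp [fderiv_fun_pow 2 hψ, inner_gradient_left]
  rw [annihilation, norm_add_sq_real, norm_smul, inner_smul_right, euler, mul_pow, Real.norm_eq_abs,
    sq_abs]
  ring

lemma annihilation_groundState_mul (t : ℝ) {g : E → ℝ} {x : E} (hg : DifferentiableAt ℝ g x) :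
    annihilation t (fun y ↦ groundState t y * g y) x = groundState t x • gradient g x := by
  have grad : gradient (fun y ↦ groundState t y * g y) x =
      groundState t x • gradient g x - (2 * t * (groundState t x * g x)) • x := by
    refine HasGradientAt.gradient (hasGradientAt_iff_hasFDerivAt.mpr ?_)
    refine ((hasFDerivAt_groundState t x).mul hg.hasFDerivAt).congr_fderiv ?_
    ext v
    simp
    ring
  rw [annihilation, grad, sub_add_cancel]

end Annihilation

section Energy

variable {E : Type*} [NormedAddCommGroup E] [InnerProductSpace ℝ E] [FiniteDimensional ℝ E]
  [MeasurableSpace E]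

/-- The quadratic form of the oscillator `-Δ + 4t²‖x‖²`. -/
def oscillatorEnergy (μ : Measure E) (t : ℝ) (ψ : E → ℝ) : ℝ :=
  (∫ x, ‖gradient ψ x‖ ^ 2 ∂μ) + 4 * t ^ 2 * ∫ x, ‖x‖ ^ 2 * ψ x ^ 2 ∂μ

/-- The Rayleigh quotient of the oscillator `-Δ + 4t²‖x‖²`, with the junk value `0` where
`∫ ψ² = 0`. -/
def oscillatorRayleighQuotient (μ : Measure E) (t : ℝ) (ψ : E → ℝ) : ℝ :=
  oscillatorEnergy μ t ψ / ∫ x, ψ x ^ 2 ∂μ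

lemma oscillatorRayleighQuotient_nonneg (μ : Measure E) (t : ℝ) (ψ : E → ℝ) :
    0 ≤ oscillatorRayleighQuotient μ t ψ := by
  unfold oscillatorRayleighQuotient oscillatorEnergy
  positivity

variable [BorelSpace E] {μ : Measure E}

lemma integrable_norm_gradient_sq [IsFiniteMeasureOnCompacts μ] {ψ : E → ℝ}
    (hψ : ContDiff ℝ 1 ψ) (hc : HasCompactSupport ψ) :
    Integrable (fun x ↦ ‖gradient ψ x‖ ^ 2) μ :=
  integrable_sq_of_hasCompactSupport (continuous_gradient hψ).norm
    (hasCompactSupport_gradient hc).norm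

variable [μ.IsAddHaarMeasure]

lemma oscillatorEnergy_eq_add_integral_annihilation_sq (t : ℝ) {ψ : E → ℝ} (hψ : ContDiff ℝ 1 ψ)
    (hc : HasCompactSupport ψ) :
    oscillatorEnergy μ t ψ =
      2 * finrank ℝ E * t * (∫ x, ψ x ^ 2 ∂μ) + ∫ x, ‖annihilation t ψ x‖ ^ 2 ∂μ := by
  have hsq : ContDiff ℝ 1 (fun x ↦ ψ x ^ 2) := hψ.pow 2
  have hsqc : HasCompactSupport (fun x ↦ ψ x ^ 2) := hasCompactSupport_sq hc
  have int_grad : Integrable (fun x ↦ ‖gradient ψ x‖ ^ 2) μ := integrable_norm_gradient_sq hψ hc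
  have int_pot : Integrable (fun x ↦ 4 * t ^ 2 * (‖x‖ ^ 2 * ψ x ^ 2)) μ :=
    (((continuous_norm.pow 2).mul hsq.continuous).integrable_of_hasCompactSupport
      hsqc.mul_left).const_mul _
  have int_euler : Integrable (fun x ↦ 2 * t * fderiv ℝ (fun y ↦ ψ y ^ 2) x x) μ := by
    refine (((hsq.continuous_fderiv one_ne_zero).clm_apply
      continuous_id).integrable_of_hasCompactSupport ?_).const_mul _
    exact (hsqc.fderiv (𝕜 := ℝ)).mono fun x hx h ↦ hx (by simp [h])
  have square (x : E) : ‖annihilation t ψ x‖ ^ 2 = ‖gradient ψ x‖ ^ 2 +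
      4 * t ^ 2 * (‖x‖ ^ 2 * ψ x ^ 2) + 2 * t * fderiv ℝ (fun y ↦ ψ y ^ 2) x x := by
    rw [norm_gradient_sq_add_potential t (hψ.differentiable one_ne_zero x), sub_add_cancel]
  have expand : ∫ x, ‖annihilation t ψ x‖ ^ 2 ∂μ = oscillatorEnergy μ t ψ +
      2 * t * ∫ x, fderiv ℝ (fun y ↦ ψ y ^ 2) x x ∂μ := by
    simp_rw [square]
    rw [integral_add (by exact int_grad.add int_pot) int_euler, integral_add int_grad int_pot,
      integral_const_mul, integral_const_mul, oscillatorEnergy]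
  rw [expand, integral_fderiv_apply_self hsq hsqc, smul_eq_mul]
  ring

lemma oscillatorEnergy_groundState_mul (t : ℝ) {g : E → ℝ} (hg : ContDiff ℝ 1 g)
    (hc : HasCompactSupport g) :
    oscillatorEnergy μ t (fun x ↦ groundState t x * g x) =
      2 * finrank ℝ E * t * (∫ x, (groundState t x * g x) ^ 2 ∂μ) +
        ∫ x, groundState t x ^ 2 * ‖gradient g x‖ ^ 2 ∂μ := by
  rw [oscillatorEnergy_eq_add_integral_annihilation_sq t ((contDiff_groundState t).mul hg)
    hc.mul_left]
  simp_rw [annihilation_groundState_mul t (hg.differentiable one_ne_zero _), norm_smul, mul_pow,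
    Real.norm_eq_abs, sq_abs]

lemma oscillatorEnergy_groundState_mul_bump_le (b : ContDiffBump (0 : E)) {t s c : ℝ} (ht : 0 ≤ t)
    (hs : 0 < s) (hsb : s ≤ b.rIn) (hc : c ≤ 2 * (b.rIn ^ 2 - s ^ 2)) :
    oscillatorEnergy μ t (fun x ↦ groundState t x * b x) ≤
      (2 * finrank ℝ E * t +
        (∫ x, ‖gradient b x‖ ^ 2 ∂μ) / μ.real (ball 0 s) * Real.exp (-c * t)) *
        ∫ x, (groundState t x * b x) ^ 2 ∂μ := by
  set K := ∫ x, ‖gradient b x‖ ^ 2 ∂μ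
  set V := μ.real (ball (0 : E) s)
  have hK : 0 ≤ K := integral_nonneg fun x ↦ sq_nonneg _
  have hV : 0 < V := ENNReal.toReal_pos (measure_ball_pos μ 0 hs).ne' measure_ball_lt_top.ne
  have tail : ∫ x, groundState t x ^ 2 * ‖gradient b x‖ ^ 2 ∂μ ≤
      Real.exp (-(2 * t * b.rIn ^ 2)) * K := by
    refine integral_groundState_sq_mul_le ht b.rIn_pos.le
      (integrable_norm_gradient_sq b.contDiff b.hasCompactSupport) (fun x ↦ sq_nonneg _)
      fun x hx ↦ ?_
    rw [(b.eventuallyEq_one_of_mem_ball hx).gradient_eq]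
    simp [gradient]
  have mass : Real.exp (-(2 * t * s ^ 2)) * V ≤ ∫ x, (groundState t x * b x) ^ 2 ∂μ := by
    refine exp_mul_measureReal_ball_le_integral ht measure_ball_lt_top.ne ?_ fun x hx ↦
      b.one_of_mem_closedBall (ball_subset_closedBall (ball_subset_ball hsb hx))
    have hcont : Continuous fun x ↦ groundState t x * b x :=
      (contDiff_groundState t (n := 0)).continuous.mul b.continuous
    exact integrable_sq_of_hasCompactSupport hcont b.hasCompactSupport.mul_left
  have rate : Real.exp (-(2 * t * b.rIn ^ 2)) ≤
      Real.exp (-c * t) * Real.exp (-(2 * t * s ^ 2)) := by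
    rw [← Real.exp_add]
    gcongr
    nlinarith
  rw [oscillatorEnergy_groundState_mul t b.contDiff b.hasCompactSupport, add_mul]
  gcongr
  calc ∫ x, groundState t x ^ 2 * ‖gradient b x‖ ^ 2 ∂μ
      ≤ Real.exp (-c * t) * Real.exp (-(2 * t * s ^ 2)) * K :=
        tail.trans (mul_le_mul_of_nonneg_right rate hK)
    _ = K / V * Real.exp (-c * t) * (Real.exp (-(2 * t * s ^ 2)) * V) := by field_simp
    _ ≤ K / V * Real.exp (-c * t) * ∫ x, (groundState t x * b x) ^ 2 ∂μ := by gcongr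

end Energy

section TrialFunction

variable {E : Type*} [NormedAddCommGroup E] [NormedSpace ℝ E]

/-- Nonzero smooth functions with compact support in `U`, the admissible functions in the Rayleigh
quotient of an operator on `U` with Dirichlet boundary conditions. -/
def IsTrialFunction (U : Set E) (ψ : E → ℝ) : Prop :=
  ContDiff ℝ (⊤ : ℕ∞) ψ ∧ ψ ≠ 0 ∧ HasCompactSupport ψ ∧ tsupport ψ ⊆ U

lemma IsTrialFunction.integral_sq_pos [MeasurableSpace E] [OpensMeasurableSpace E]
    {μ : Measure E} [μ.IsOpenPosMeasure] [IsFiniteMeasureOnCompacts μ] {U : Set E} {ψ : E → ℝ}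
    (hψ : IsTrialFunction U ψ) : 0 < ∫ x, ψ x ^ 2 ∂μ := by
  obtain ⟨hsmooth, hne, hc, -⟩ := hψ
  obtain ⟨x, hx⟩ := Function.ne_iff.mp hne
  exact (hsmooth.continuous.pow 2).integral_pos_of_hasCompactSupport_nonneg_nonzero
    (hasCompactSupport_sq hc) (fun y ↦ sq_nonneg _) (pow_ne_zero 2 hx)

end TrialFunction

section RayleighQuotient

variable {E : Type*} [NormedAddCommGroup E] [InnerProductSpace ℝ E] [FiniteDimensional ℝ E]

lemma isTrialFunction_groundState_mul_bump (t : ℝ) {R : ℝ} (b : ContDiffBump (0 : E))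
    (hb : b.rOut < R) :
    IsTrialFunction (ball 0 R) fun x ↦ groundState t x * b x := by
  refine ⟨(contDiff_groundState t).mul b.contDiff, fun h ↦ ?_, b.hasCompactSupport.mul_left,
    (tsupport_mul_subset_right (f := groundState t)).trans ?_⟩
  · simpa [groundState, b.one_of_mem_closedBall (mem_closedBall_self b.rIn_pos.le)]
      using congrFun h 0
  · exact b.tsupport_eq.trans_subset (closedBall_subset_ball hb)

lemma IsTrialFunction.sInf_oscillatorRayleighQuotient_le [MeasurableSpace E]
    [OpensMeasurableSpace E] {μ : Measure E} [μ.IsOpenPosMeasure] [IsFiniteMeasureOnCompacts μ]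
    {U : Set E} {t A : ℝ} {ψ : E → ℝ} (hψ : IsTrialFunction U ψ)
    (hA : oscillatorEnergy μ t ψ ≤ A * ∫ x, ψ x ^ 2 ∂μ) :
    sInf {r | ∃ φ, IsTrialFunction U φ ∧ r = oscillatorRayleighQuotient μ t φ} ≤ A := by
  refine csInf_le_of_le ⟨0, ?_⟩ ⟨ψ, hψ, rfl⟩ ((div_le_iff₀ hψ.integral_sq_pos).mpr hA)
  rintro r ⟨φ, -, rfl⟩
  exact oscillatorRayleighQuotient_nonneg μ t φ

end RayleighQuotient

lemma exists_radii_of_lt_two_mul_sq {R c : ℝ} (hR : 0 < R) (hc : c < 2 * R ^ 2) :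
    ∃ s r : ℝ, 0 < s ∧ s < r ∧ r < R ∧ c ≤ 2 * (r ^ 2 - s ^ 2) := by
  have near_R : ∀ᶠ r in 𝓝[<] R, c < 2 * r ^ 2 :=
    ((by fun_prop : Continuous fun r : ℝ ↦ 2 * r ^ 2).tendsto R).eventually_const_lt hc
      |>.filter_mono nhdsWithin_le_nhds
  obtain ⟨r, hcr, hr, hrR⟩ := (near_R.and (Ioo_mem_nhdsLT hR)).exists
  have near_zero : ∀ᶠ s in 𝓝[>] 0, c < 2 * (r ^ 2 - s ^ 2) :=
    ((by fun_prop : Continuous fun s : ℝ ↦ 2 * (r ^ 2 - s ^ 2)).tendsto 0).eventually_const_lt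
      (by simpa using hcr) |>.filter_mono nhdsWithin_le_nhds
  obtain ⟨s, hcs, hs, hsr⟩ := (near_zero.and (Ioo_mem_nhdsGT hr)).exists
  exact ⟨s, r, hs, hsr, hrR, hcs.le⟩

theorem oscillator_rayleigh_quotient_bound_general {E : Type*} [NormedAddCommGroup E]
    [InnerProductSpace ℝ E] [FiniteDimensional ℝ E] [MeasurableSpace E] [BorelSpace E]
    (μ : Measure E) [μ.IsAddHaarMeasure] {R c : ℝ} (hR : 0 < R) (hc : c < 2 * R ^ 2) :
    ∃ C : ℝ, 0 < C ∧ ∀ t : ℝ, 0 ≤ t →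
      (∃ ψ : E → ℝ, IsTrialFunction (ball 0 R) ψ ∧
        oscillatorEnergy μ t ψ ≤
          (2 * finrank ℝ E * t + C * Real.exp (-c * t)) * ∫ x, ψ x ^ 2 ∂μ) ∧
      sInf {r | ∃ ψ, IsTrialFunction (ball 0 R) ψ ∧ r = oscillatorRayleighQuotient μ t ψ} ≤
        2 * finrank ℝ E * t + C * Real.exp (-c * t) := by
  obtain ⟨s, r, hs, hsr, hrR, hcr⟩ := exists_radii_of_lt_two_mul_sq hR hc
  obtain ⟨ρ, hrρ, hρR⟩ := exists_between hrR
  let b : ContDiffBump (0 : E) := ⟨r, ρ, hs.trans hsr, hrρ⟩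
  let C := (∫ x, ‖gradient b x‖ ^ 2 ∂μ) / μ.real (ball 0 s) + 1
  refine ⟨C, by positivity, fun t ht ↦ ?_⟩
  let ψ (x : E) := groundState t x * b x
  have trial : IsTrialFunction (ball 0 R) ψ := isTrialFunction_groundState_mul_bump t b hρR
  have energy : oscillatorEnergy μ t ψ ≤
      (2 * finrank ℝ E * t + C * Real.exp (-c * t)) * ∫ x, ψ x ^ 2 ∂μ := by
    refine (oscillatorEnergy_groundState_mul_bump_le b ht hs hsr.le hcr).trans ?_
    gcongr
    exact le_add_of_nonneg_right zero_le_one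
  exact ⟨⟨ψ, trial, energy⟩, trial.sInf_oscillatorRayleighQuotient_le energy⟩

/-- Rayleigh quotient bound for the harmonic-oscillator-type operator
`-Δ + 4n²|x|²` on the unit disc `B(0,1) ⊂ ℝ²`: there are `C, c > 0` and `n₀ ≥ 1` such
that for every `n ≥ n₀` there is a nonzero smooth test function `ψ` compactly supported
in `B` with `∫|∇ψ|² + 4n²∫|x|²ψ² ≤ (4n + C e^{-cn}) ∫ψ²`; consequently the infimum of
the Rayleigh quotient over such test functions is at most `4n + C e^{-cn}`. -/
theorem oscillator_rayleigh_quotient_bound :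
    ∃ C : ℝ, 0 < C ∧ ∃ c : ℝ, 0 < c ∧ ∃ n₀ : ℕ, 1 ≤ n₀ ∧
      ∀ n : ℕ, n₀ ≤ n →
        (∃ ψ : EuclideanSpace ℝ (Fin 2) → ℝ,
          ContDiff ℝ (⊤ : ℕ∞) ψ ∧ ψ ≠ 0 ∧ HasCompactSupport ψ ∧
          tsupport ψ ⊆ Metric.ball (0 : EuclideanSpace ℝ (Fin 2)) 1 ∧
          (∫ x, ‖gradient ψ x‖ ^ 2) + 4 * (n : ℝ) ^ 2 * ∫ x, ‖x‖ ^ 2 * (ψ x) ^ 2 ≤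
            (4 * (n : ℝ) + C * Real.exp (-c * n)) * ∫ x, (ψ x) ^ 2) ∧
        sInf {r : ℝ | ∃ ψ : EuclideanSpace ℝ (Fin 2) → ℝ,
            ContDiff ℝ (⊤ : ℕ∞) ψ ∧ ψ ≠ 0 ∧ HasCompactSupport ψ ∧
            tsupport ψ ⊆ Metric.ball (0 : EuclideanSpace ℝ (Fin 2)) 1 ∧
            r = ((∫ x, ‖gradient ψ x‖ ^ 2) +
                  4 * (n : ℝ) ^ 2 * ∫ x, ‖x‖ ^ 2 * (ψ x) ^ 2) / ∫ x, (ψ x) ^ 2} ≤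
          4 * (n : ℝ) + C * Real.exp (-c * n) := by
  obtain ⟨C, hC, h⟩ := oscillator_rayleigh_quotient_bound_general
    (volume : Measure (EuclideanSpace ℝ (Fin 2))) one_pos (by norm_num : (1 : ℝ) < 2 * 1 ^ 2)
  refine ⟨C, hC, 1, one_pos, 1, le_rfl, fun n _ ↦ ?_⟩
  simpa [IsTrialFunction, oscillatorEnergy, oscillatorRayleighQuotient, and_assoc,
    (by norm_num : (2 : ℝ) * 2 = 4)] using h n n.cast_nonneg
end
end
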